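/- arXiv:1709.09200 — 2 statements merged into one kernel-verified Lean document; each statement's English description precedes it below -/
import Mathlib

section
/- Let d ≥ 3 and let 𝔢 be a dispersion relation of class C³ satisfying condition (M). There exists a constant c(𝔢) > 0, depending only on 𝔢, such that for every potential V : Γ → ℝ with Φ_{2,2}(V) < c(𝔢), the operator H(𝔢,V) has no eigenvalues, i.e., N_pp[𝔢,V] = 0. -/
open MeasureTheory Complex Real
open scoped ENNReal

noncomputable section

namespace LatSch

/-- The lattice `Γ = ℤ^d`. -/
abbrev Γd (d : ℕ) := Fin d → ℤ

/-- The Hilbert space `ℓ²(Γ)`. -/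
abbrev L2 (d : ℕ) := lp (fun _ : Γd d => ℂ) 2

/-- Euclidean norm of a lattice point. -/
def lnorm {d : ℕ} (x : Γd d) : ℝ := Real.sqrt (∑ i, ((x i : ℝ)) ^ 2)

/-- The standard basis vector `δ_x` of `ℓ²(Γ)`. -/
def delta {d : ℕ} (x : Γd d) : L2 d := lp.single 2 x 1

local notation "⟪" a ", " b "⟫" => @inner ℂ _ _ a b

/-- The cube `[-π, π]^d`, a fundamental domain of the torus. -/
def torusBox (d : ℕ) : Set (Fin d → ℝ) := Set.univ.pi fun _ => Set.Icc (-π) π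

/-- `⟨p, m⟩` for `p ∈ ℝ^d`, `m ∈ ℤ^d`. -/
def dotZ {d : ℕ} (p : Fin d → ℝ) (m : Γd d) : ℝ := ∑ i, p i * (m i : ℝ)

/-- Fourier coefficient `f̂(m) = (2π)^{-d} ∫_{[-π,π]^d} f(p) e^{i⟨p,m⟩} dp`. -/
def fCoeff {d : ℕ} (f : (Fin d → ℝ) → ℝ) (m : Γd d) : ℂ :=
  ((1 / (2 * π) ^ d : ℝ) : ℂ) *
    ∫ p in torusBox d, (f p : ℂ) * Complex.exp (Complex.I * (dotZ p m : ℝ))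

/-- `H` is the Fourier multiplier (hopping matrix) `h(f)`, characterized by its
matrix elements `⟨δ_x, H δ_y⟩ = f̂(x - y)`. -/
def IsMultiplier {d : ℕ} (f : (Fin d → ℝ) → ℝ) (H : L2 d →L[ℂ] L2 d) : Prop :=
  ∀ x y : Γd d, ⟪delta x, H (delta y)⟫ = fCoeff f (x - y)

/-- `M` is the operator of multiplication by the potential `V`. -/
def IsMulOp {d : ℕ} (V : Γd d → ℝ) (M : L2 d →L[ℂ] L2 d) : Prop :=
  ∀ (ψ : L2 d) (x : Γd d), (M ψ : ∀ _ : Γd d, ℂ) x = (V x : ℂ) * (ψ : ∀ _ : Γd d, ℂ) x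

/-- Partial derivative `∂_{p_k} f (p)`. -/
def pd {d : ℕ} (f : (Fin d → ℝ) → ℝ) (k : Fin d) (p : Fin d → ℝ) : ℝ :=
  fderiv ℝ f p (Pi.single k 1)

/-- `|∇f|²(p) = Σ_k (∂_{p_k} f(p))²`. -/
def gradSq {d : ℕ} (f : (Fin d → ℝ) → ℝ) (p : Fin d → ℝ) : ℝ := ∑ k, pd f k p ^ 2

/-- The Hessian matrix of `f` at `p`. -/
def hess {d : ℕ} (f : (Fin d → ℝ) → ℝ) (p : Fin d → ℝ) : Matrix (Fin d) (Fin d) ℝ :=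
  Matrix.of fun i j => fderiv ℝ (fun q => fderiv ℝ f q (Pi.single j 1)) p (Pi.single i 1)

/-- All critical points of `f` are nondegenerate (`f` is a Morse function). -/
def IsMorse {d : ℕ} (f : (Fin d → ℝ) → ℝ) : Prop :=
  ∀ p, fderiv ℝ f p = 0 → (hess f p).det ≠ 0

/-- `2πℤ^d`-periodicity. -/
def Periodic2pi {d : ℕ} (f : (Fin d → ℝ) → ℝ) : Prop :=
  ∀ (p : Fin d → ℝ) (m : Γd d), f (p + fun i => 2 * π * (m i : ℝ)) = f p

/-- A dispersion relation: a `2πℤ^d`-periodic function with minimum `0`. -/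
def IsDispersion {d : ℕ} (f : (Fin d → ℝ) → ℝ) : Prop :=
  Periodic2pi f ∧ (∀ p, 0 ≤ f p) ∧ (∃ p, f p = 0)

/-- Condition (M): `𝔢` and `|∇𝔢|²` are Morse functions. -/
def CondM {d : ℕ} (f : (Fin d → ℝ) → ℝ) : Prop := IsMorse f ∧ IsMorse (gradSq f)

/-- `Φ_{m,n}(V) = (Σ_x |V(x)|^{1/m} (1+|x|)^n)^m`, valued in `[0,∞]`. -/
def Phi {d : ℕ} (m n : ℕ) (V : Γd d → ℝ) : ℝ≥0∞ :=
  (∑' x : Γd d, ENNReal.ofReal (|V x| ^ ((1 : ℝ) / m) * (1 + lnorm x) ^ n)) ^ m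

/-- The set of eigenvectors of `H` (with real eigenvalue). -/
def eigvecs {d : ℕ} (H : L2 d →L[ℂ] L2 d) : Set (L2 d) :=
  {ψ : L2 d | ψ ≠ 0 ∧ ∃ μ : ℝ, H ψ = (μ : ℂ) • ψ}

/-- `N_pp[H]`: the Hilbert-space dimension of the closed linear span of all
eigenvectors of `H`. -/
def Npp {d : ℕ} (H : L2 d →L[ℂ] L2 d) : Cardinal :=
  Module.rank ℂ ((Submodule.span ℂ (eigvecs H)).topologicalClosure)

/-- The Fourier transform `ĝ_x(p) = (i/2·|∇𝔢(p)|² + ⟨∇𝔢(p), x⟩) e^{-i⟨p,x⟩}`. -/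
def ghat {d : ℕ} (e : (Fin d → ℝ) → ℝ) (x : Γd d) (p : Fin d → ℝ) : ℂ :=
  ((Complex.I / 2) * ((gradSq e p : ℝ) : ℂ) + ((∑ k, pd e k p * (x k : ℝ) : ℝ) : ℂ)) *
    Complex.exp (-(Complex.I * (dotZ p x : ℝ)))

/-- `g : Γ → ℓ²(Γ)` is the family of vectors `g_x` with Fourier transform `ĝ_x`. -/
def IsGVec {d : ℕ} (e : (Fin d → ℝ) → ℝ) (g : Γd d → L2 d) : Prop :=
  ∀ x m : Γd d,
    (g x : ∀ _ : Γd d, ℂ) m =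
      ((1 / (2 * π) ^ d : ℝ) : ℂ) *
        ∫ p in torusBox d, ghat e x p * Complex.exp (Complex.I * (dotZ p m : ℝ))

/-- `C` is the bounded self-adjoint realization
`C_V = Σ_x i V(x) (|δ_x⟩⟨g_x| - |g_x⟩⟨δ_x|)` of the commutator `i[V, A(𝔢)]`. -/
def IsCommOp {d : ℕ} (V : Γd d → ℝ) (g : Γd d → L2 d) (C : L2 d →L[ℂ] L2 d) : Prop :=
  ∀ ψ : L2 d,
    HasSum (fun x : Γd d =>
      (Complex.I * (V x : ℂ)) • (⟪g x, ψ⟫ • delta x - ⟪delta x, ψ⟫ • g x)) (C ψ)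

/-- `R` is the resolvent `(z - H)^{-1}`. -/
def IsResolventAt {d : ℕ} (H : L2 d →L[ℂ] L2 d) (z : ℂ) (R : L2 d →L[ℂ] L2 d) : Prop :=
  R.comp (z • (1 : L2 d →L[ℂ] L2 d) - H) = 1 ∧ (z • (1 : L2 d →L[ℂ] L2 d) - H).comp R = 1

/-- `‖f‖_{C^m} ≤ C`: all partial derivatives of order `≤ m` are bounded by `C`. -/
def CmNormLe {d : ℕ} (m : ℕ) (f : (Fin d → ℝ) → ℝ) (C : ℝ) : Prop :=
  ∀ j : ℕ, j ≤ m → ∀ (p : Fin d → ℝ) (k : Fin j → Fin d),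
    |iteratedFDeriv ℝ j f p (fun i => Pi.single (k i) 1)| ≤ C

/-- `K(𝔢) ≥ K`: at every critical point, every eigenvalue `λ` of the Hessian
satisfies `|λ|^{1/2} ≥ K`. -/
def MinCurvGe {d : ℕ} (f : (Fin d → ℝ) → ℝ) (K : ℝ) : Prop :=
  ∀ p, fderiv ℝ f p = 0 → ∀ (lam : ℝ) (v : Fin d → ℝ), v ≠ 0 →
    (hess f p).mulVec v = lam • v → K ^ 2 ≤ |lam|

/-- The set of thresholds `Thr(𝔢) = 𝔢(Crit(𝔢))`. -/
def Thr {d : ℕ} (f : (Fin d → ℝ) → ℝ) : Set ℝ := f '' {p | fderiv ℝ f p = 0}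


/-- The number of strictly negative eigenvalues of `C`, counted with multiplicity:
the dimension of the span of eigenvectors with strictly negative eigenvalue. -/
def NegCount {d : ℕ} (C : L2 d →L[ℂ] L2 d) : Cardinal :=
  Module.rank ℂ (Submodule.span ℂ
    {ψ : L2 d | ψ ≠ 0 ∧ ∃ μ : ℝ, μ < 0 ∧ C ψ = (μ : ℂ) • ψ})

/-- The number of strictly positive eigenvalues of `C`, counted with multiplicity. -/
def PosCount {d : ℕ} (C : L2 d →L[ℂ] L2 d) : Cardinal :=
  Module.rank ℂ (Submodule.span ℂ
    {ψ : L2 d | ψ ≠ 0 ∧ ∃ μ : ℝ, 0 < μ ∧ C ψ = (μ : ℂ) • ψ})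




/-- The half-open unit cube centred at the origin. -/
def cubeQ (d : ℕ) : Set (Fin d → ℝ) := {x | ∀ i, x i ∈ Set.Ioc (-1/2 : ℝ) (-1/2 + 1)}

/-- Lebesgue measure on the unit cube. -/
def nu (d : ℕ) : Measure (Fin d → ℝ) := volume.restrict (cubeQ d)

/-- Plane waves. -/
def chi {d : ℕ} (x : Γd d) (q : Fin d → ℝ) : ℂ :=
  Complex.exp (((2 * π * dotZ q x : ℝ) : ℂ) * Complex.I)

lemma measurableSet_cubeQ (d : ℕ) : MeasurableSet (cubeQ d) :=
  MeasurableSet.univ_pi' (fun _ => measurableSet_Ioc)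

lemma continuous_dotZ {d : ℕ} (x : Γd d) : Continuous fun q : Fin d → ℝ => dotZ q x := by
  unfold dotZ; fun_prop

lemma continuous_chi {d : ℕ} (x : Γd d) : Continuous (chi x) := by
  unfold chi
  have := continuous_dotZ x
  fun_prop

lemma norm_chi {d : ℕ} (x : Γd d) (q) : ‖chi x q‖ = 1 := by
  unfold chi; exact Complex.norm_exp_ofReal_mul_I _

lemma dotZ_add {d : ℕ} (q : Fin d → ℝ) (x y : Γd d) : dotZ q (x + y) = dotZ q x + dotZ q y := by
  simp [dotZ, mul_add, Finset.sum_add_distrib]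

lemma dotZ_neg {d : ℕ} (q : Fin d → ℝ) (x : Γd d) : dotZ q (-x) = - dotZ q x := by
  simp [dotZ]

lemma chi_add {d : ℕ} (x y : Γd d) (q) : chi (x + y) q = chi x q * chi y q := by
  simp only [chi, dotZ_add, ← Complex.exp_add]; congr 1; push_cast; ring

lemma chi_neg {d : ℕ} (x : Γd d) (q) : chi (-x) q = (starRingEnd ℂ) (chi x q) := by
  simp only [chi, dotZ_neg, ← Complex.exp_conj]; congr 1
  simp only [map_mul, Complex.conj_ofReal, Complex.conj_I]; push_cast; ring

lemma cubeQ_ae_eq (d : ℕ) : cubeQ d =ᵐ[volume]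
    Set.Icc (fun _ : Fin d => (-1/2 : ℝ)) (fun _ => -1/2 + 1) := by
  have h : cubeQ d = Set.univ.pi fun _ : Fin d => Set.Ioc (-1/2 : ℝ) (-1/2 + 1) := by
    ext x; simp [cubeQ]
  rw [h]
  exact Measure.univ_pi_Ioc_ae_eq_Icc

lemma cubeQ_subset (d : ℕ) : cubeQ d ⊆
    Set.Icc (fun _ : Fin d => (-1/2 : ℝ)) (fun _ => -1/2 + 1) :=
  fun _ hx => ⟨fun i => (hx i).1.le, fun i => (hx i).2⟩

lemma nu_eq (d : ℕ) : nu d =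
    volume.restrict (Set.Icc (fun _ : Fin d => (-1/2 : ℝ)) (fun _ => -1/2 + 1)) :=
  Measure.restrict_congr_set (cubeQ_ae_eq d)

instance (d : ℕ) : IsFiniteMeasure (nu d) := by
  rw [nu_eq]
  exact ⟨by rw [Measure.restrict_apply_univ]; exact isCompact_Icc.measure_lt_top⟩

lemma memLp_chi {d : ℕ} (x : Γd d) : MemLp (chi x) 2 (nu d) :=
  MemLp.of_bound (continuous_chi x).aestronglyMeasurable 1
    (Filter.Eventually.of_forall fun q => (norm_chi x q).le)

/-- Plane waves in `L²`. -/
def chiLp {d : ℕ} (x : Γd d) : Lp ℂ 2 (nu d) := (memLp_chi x).toLp _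

section Torus

local instance instMSUAC : MeasureSpace UnitAddCircle := ⟨AddCircle.haarAddCircle⟩

local instance instHaarUAC : Measure.IsAddHaarMeasure (volume : Measure UnitAddCircle) :=
  inferInstanceAs (Measure.IsAddHaarMeasure AddCircle.haarAddCircle)

local instance instProbUAC : IsProbabilityMeasure (volume : Measure UnitAddCircle) :=
  inferInstanceAs (IsProbabilityMeasure AddCircle.haarAddCircle)

lemma mFourier_coe {d : ℕ} (x : Γd d) (q : Fin d → ℝ) :
    UnitAddTorus.mFourier x (fun i => (q i : UnitAddCircle)) = chi x q := by
  simp only [UnitAddTorus.mFourier, ContinuousMap.coe_mk, fourier_coe_apply, chi, dotZ,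
    ← Complex.exp_sum]
  congr 1
  push_cast
  rw [Finset.mul_sum, Finset.sum_mul]
  exact Finset.sum_congr rfl fun i _ => by ring

lemma integral_chi {d : ℕ} (x : Γd d) : ∫ q, chi x q ∂(nu d) = if x = 0 then 1 else 0 := by
  have h := UnitAddTorus.integral_preimage (fun t : UnitAddTorus (Fin d) => UnitAddTorus.mFourier x t)
    (fun _ => -1/2)
  simp only [mFourier_coe] at h
  have h2 := orthonormal_iff_ite.mp (UnitAddTorus.orthonormal_mFourier (d := Fin d)) 0 x
  simp only [ContinuousMap.inner_toLp, UnitAddTorus.mFourier_zero] at h2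
  simp only [ContinuousMap.one_apply, map_one, mul_one] at h2
  rw [nu, cubeQ, ← h, h2]
  simp [eq_comm]

lemma inner_chiLp {d : ℕ} (x : Γd d) (f : Lp ℂ 2 (nu d)) :
    inner ℂ (chiLp x) f = ∫ q, chi (-x) q * f q ∂(nu d) := by
  rw [MeasureTheory.L2.inner_def]
  apply integral_congr_ae
  filter_upwards [(memLp_chi x).coeFn_toLp] with q hq
  rw [chiLp, hq, chi_neg, RCLike.inner_apply, mul_comm]

lemma orthonormal_chiLp (d : ℕ) : Orthonormal ℂ (chiLp (d := d)) := by
  rw [orthonormal_iff_ite]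
  intro x y
  rw [inner_chiLp]
  have : ∫ q, chi (-x) q * (chiLp y : (Fin d → ℝ) → ℂ) q ∂(nu d) = ∫ q, chi (-x + y) q ∂(nu d) := by
    apply integral_congr_ae
    filter_upwards [(memLp_chi y).coeFn_toLp] with q hq
    rw [chiLp, hq, chi_add]
  rw [this, integral_chi]
  congr 1
  simp [neg_add_eq_zero]

lemma complete_chi {d : ℕ} (f : Lp ℂ 2 (nu d))
    (hf : ∀ x : Γd d, ∫ q, chi (-x) q * f q ∂(nu d) = 0) : f = 0 := by
  set a : Fin d → ℝ := fun _ => -1/2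
  have hset : {x : Fin d → ℝ | ∀ i, x i ∈ Set.Ioc (a i) (a i + 1)} = cubeQ d := rfl
  let s : UnitAddTorus (Fin d) → (Fin d → ℝ) := fun t => (UnitAddTorus.measurableEquivPiIoc a t).1
  have hs : MeasurePreserving s volume (nu d) := by
    have h1 := UnitAddTorus.measurePreserving_equivPiIoc a
    have h2 : MeasurePreserving (Subtype.val : {x : Fin d → ℝ // ∀ i, x i ∈ Set.Ioc (a i) (a i + 1)} → _)
        (Measure.comap Subtype.val volume) (nu d) :=
      ⟨measurable_subtype_coe, map_comap_subtype_coe (measurableSet_cubeQ d) volume⟩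
    exact h2.comp h1
  have hsq : ∀ q ∈ cubeQ d, s (fun i => (q i : UnitAddCircle)) = q := by
    intro q hq
    funext i
    exact AddCircle.equivIoc_coe_of_mem (hq i)
  have hg : MemLp (f ∘ s) 2 volume := (Lp.memLp f).comp_measurePreserving hs
  have hg0 : hg.toLp _ = 0 := by
    apply (UnitAddTorus.mFourierBasis (d := Fin d)).repr.injective
    rw [map_zero]
    ext n
    rw [UnitAddTorus.mFourierBasis_repr]
    have : UnitAddTorus.mFourierCoeff (hg.toLp _ : UnitAddTorus (Fin d) → ℂ) n
        = UnitAddTorus.mFourierCoeff (f ∘ s) n := by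
      apply integral_congr_ae
      filter_upwards [hg.coeFn_toLp] with t ht
      rw [ht]
    rw [this, UnitAddTorus.mFourierCoeff_eq_integral _ _ a, hset]
    have h3 : (∫ q in cubeQ d, (UnitAddTorus.mFourier (-n) fun i => (q i : UnitAddCircle)) •
        (f ∘ s) fun i => (q i : UnitAddCircle)) = ∫ q in cubeQ d, chi (-n) q * f q := by
      apply setIntegral_congr_fun (measurableSet_cubeQ d)
      intro q hq
      simp only [mFourier_coe, Function.comp, hsq q hq, smul_eq_mul]
    exact h3.trans (hf n)
  have h0 : ∀ᵐ t ∂(volume : Measure (UnitAddTorus (Fin d))), f (s t) = 0 := by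
    filter_upwards [hg.coeFn_toLp, (Lp.eq_zero_iff_ae_eq_zero).1 hg0] with t h1 h2
    rw [h2] at h1
    exact h1.symm
  rw [Lp.eq_zero_iff_ae_eq_zero]
  have h1 : ∀ᵐ q ∂(Measure.map s volume), f q = 0 := by
    have hm : MeasurableSet {q | f q = 0} :=
      (Lp.stronglyMeasurable f).measurable (measurableSet_singleton 0)
    rw [ae_map_iff hs.measurable.aemeasurable hm]
    exact h0
  rw [hs.map_eq] at h1
  exact h1

end Torus

/-- The Fourier basis of `L²` of the cube. -/
def chiBasis (d : ℕ) : HilbertBasis (Γd d) ℂ (Lp ℂ 2 (nu d)) :=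
  HilbertBasis.mkOfOrthogonalEqBot (orthonormal_chiLp d) (by
    rw [Submodule.eq_bot_iff]
    intro f hf
    apply complete_chi
    intro x
    rw [← inner_chiLp]
    exact hf _ (Submodule.subset_span ⟨x, rfl⟩))

lemma coe_chiBasis (d : ℕ) : ⇑(chiBasis d) = chiLp := by
  unfold chiBasis; exact HilbertBasis.coe_mkOfOrthogonalEqBot _ _

/-- `ℤ^d`-periodicity. -/
def PerZ {d : ℕ} {X : Type*} (f : (Fin d → ℝ) → X) : Prop :=
  ∀ (q : Fin d → ℝ) (m : Γd d), f (q + fun i => (m i : ℝ)) = f q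

lemma continuous_pd {d : ℕ} {f : (Fin d → ℝ) → ℝ} (hf : ContDiff ℝ 1 f) (k : Fin d) :
    Continuous (pd f k) := by
  unfold pd
  exact (hf.continuous_fderiv one_ne_zero).clm_apply continuous_const

lemma contDiff_pd {d : ℕ} {f : (Fin d → ℝ) → ℝ} (hf : ContDiff ℝ 2 f) (k : Fin d) :
    ContDiff ℝ 1 (pd f k) := by
  unfold pd
  exact (hf.fderiv_right (m := 1) (by norm_num)).clm_apply contDiff_const

lemma PerZ.pd {d : ℕ} {f : (Fin d → ℝ) → ℝ} (hf : PerZ f) (k : Fin d) : PerZ (pd f k) := by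
  intro q m
  have h : (fun x => f (x + fun i => (m i : ℝ))) = f := funext fun x => hf x m
  have := fderiv_comp_add_right (𝕜 := ℝ) (f := f) (x := q) (fun i => (m i : ℝ))
  rw [h] at this
  unfold LatSch.pd
  rw [this]

lemma div_zero {n : ℕ} (v : Fin (n+1) → (Fin (n+1) → ℝ) → ℝ)
    (hv : ∀ i, ContDiff ℝ 1 (v i)) (hp : ∀ i, PerZ (v i)) :
    ∫ q, ∑ i, pd (v i) i q ∂(nu (n+1)) = 0 := by
  rw [nu_eq]
  have key := integral_divergence_of_hasFDerivAt_off_countable' (E := ℝ) (n := n)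
    (fun _ => (-1/2 : ℝ)) (fun _ => -1/2 + 1) (fun _ => by norm_num) v
    (fun i x => fderiv ℝ (v i) x) ∅ Set.countable_empty
    (fun i => (hv i).continuous.continuousOn)
    (fun x _ i => ((hv i).differentiable one_ne_zero x).hasFDerivAt)
    (by
      apply Continuous.integrableOn_Icc
      exact continuous_finsetSum _ fun i _ => continuous_pd (hv i) i)
  refine key.trans ?_
  apply Finset.sum_eq_zero
  intro i _
  rw [sub_eq_zero]
  congr 1
  funext x
  have := hp i (i.insertNth (-1/2 : ℝ) x) (Pi.single i 1)
  rw [← this]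
  congr 1
  funext j
  refine Fin.succAboveCases i ?_ (fun j => ?_) j
  · simp
  · simp

lemma virial {n : ℕ} {E w : (Fin (n+1) → ℝ) → ℝ} (hE : ContDiff ℝ 2 E) (hw : ContDiff ℝ 1 w)
    (hEp : PerZ E) (hwp : PerZ w) {F F' : ℝ → ℝ} (hF : ContDiff ℝ 1 F)
    (hF' : ∀ t, HasDerivAt F (F' t) t) (μ : ℝ) :
    ∫ q, (F (E q - μ) * ∑ k, (pd w k q * pd E k q + w q * pd (pd E k) k q)
      + w q * gradSq E q * F' (E q - μ)) ∂(nu (n+1)) = 0 := by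
  have h := div_zero (fun k q => (w q * pd E k q) * F (E q - μ))
    (fun k => (hw.mul (contDiff_pd hE k)).mul
      (hF.comp ((hE.of_le (by norm_num)).sub contDiff_const)))
    (fun k q m => by simp only [hEp q m, hwp q m, hEp.pd k q m])
  rw [← h]
  congr 1
  funext q
  have hk : ∀ k, pd (fun q => (w q * pd E k q) * F (E q - μ)) k q =
      F (E q - μ) * (pd w k q * pd E k q + w q * pd (pd E k) k q)
      + w q * pd E k q ^ 2 * F' (E q - μ) := by
    intro k
    have h1 : HasFDerivAt w (fderiv ℝ w q) q := (hw.differentiable one_ne_zero q).hasFDerivAt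
    have h2 : HasFDerivAt (pd E k) (fderiv ℝ (pd E k) q) q :=
      ((contDiff_pd hE k).differentiable one_ne_zero q).hasFDerivAt
    have h3 : HasFDerivAt E (fderiv ℝ E q) q := (hE.differentiable two_ne_zero q).hasFDerivAt
    have h4 := (hF' (E q - μ)).comp_hasFDerivAt q (h3.sub_const μ)
    have h5 := (h1.mul h2).mul h4
    unfold pd at h5 ⊢
    have h6 : fderiv ℝ (fun q => (w q * fderiv ℝ E q (Pi.single k 1)) * F (E q - μ)) q = _ :=
      h5.fderiv
    rw [h6]
    simp
    ring
  simp only [hk, Finset.sum_add_distrib, gradSq, ← Finset.mul_sum, ← Finset.sum_mul]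

lemma local_lower {d : ℕ} {g : (Fin d → ℝ) → (Fin d → ℝ)} {q : Fin d → ℝ} (hq : g q = 0)
    {g' : (Fin d → ℝ) →L[ℝ] (Fin d → ℝ)} (hg : HasFDerivAt g g' q)
    (hi : Function.Injective g') :
    ∃ c : ℝ, 0 < c ∧ ∀ᶠ x in nhds q, c * ‖x - q‖ ≤ ‖g x‖ := by
  obtain ⟨K, hK, hA⟩ := LinearMap.exists_antilipschitzWith (g' : (Fin d → ℝ) →ₗ[ℝ] (Fin d → ℝ))
    (LinearMap.ker_eq_bot.2 hi)
  have hK' : (0 : ℝ) < K := hK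
  refine ⟨(2 * K)⁻¹, by positivity, ?_⟩
  have h := hg.isLittleO.def (c := (2 * K)⁻¹) (by positivity)
  filter_upwards [h] with x hx
  rw [hq, sub_zero] at hx
  have h1 : ‖x - q‖ ≤ K * ‖g' (x - q)‖ := by
    have := hA.le_mul_dist (x - q) 0
    simpa [dist_eq_norm] using this
  have h2 : ‖g' (x - q)‖ ≤ ‖g x‖ + ‖g x - g' (x - q)‖ := by
    have := norm_sub_le (g x) (g x - g' (x - q))
    simpa using this
  have h3 : (K : ℝ)⁻¹ * ‖x - q‖ ≤ ‖g' (x - q)‖ := by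
    rw [inv_mul_le_iff₀ hK']; exact h1
  have h4 : (2 * (K : ℝ))⁻¹ = (K : ℝ)⁻¹ / 2 := by rw [mul_inv]; ring
  rw [h4] at hx ⊢
  linarith

lemma integrableAt_norm_inv_sq {d : ℕ} (hd : 3 ≤ d) (q : Fin d → ℝ) :
    IntegrableAtFilter (fun x : Fin d → ℝ => (‖x - q‖ ^ 2)⁻¹) (nhds q) volume := by
  have : Nontrivial (Fin d → ℝ) := by
    have : Nonempty (Fin d) := ⟨⟨0, by omega⟩⟩
    infer_instance
  refine ⟨Metric.ball q 1, Metric.ball_mem_nhds q one_pos, ?_⟩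
  have h0 : IntegrableOn (fun x : Fin d → ℝ => (fun r : ℝ => (r ^ 2)⁻¹) ‖x‖)
      (Metric.ball 0 1) volume := by
    refine (integrableOn_fun_norm_addHaar (E := Fin d → ℝ) volume (f := fun r : ℝ => (r ^ 2)⁻¹) (r := 1)).2 ?_
    have : IntegrableOn (fun y : ℝ => y ^ (d - 3)) (Set.Ioo 0 1) volume :=
      (Continuous.integrableOn_Icc (by fun_prop)).mono_set Set.Ioo_subset_Icc_self
    refine this.congr_fun ?_ measurableSet_Ioo
    intro y hy
    have hy0 : y ≠ 0 := hy.1.ne'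
    simp only [Module.finrank_fin_fun, smul_eq_mul]
    have : d - 1 = (d - 3) + 2 := by omega
    rw [this, pow_add]
    field_simp
  have h1 := (measurePreserving_sub_right (volume : Measure (Fin d → ℝ)) q).integrableOn_comp_preimage
    (MeasurableEquiv.subRight q).measurableEmbedding
    (f := fun x : Fin d → ℝ => (fun r : ℝ => (r ^ 2)⁻¹) ‖x‖) (s := Metric.ball 0 1)
  have h2 := h1.2 h0
  have : (fun x => x - q) ⁻¹' Metric.ball (0 : Fin d → ℝ) 1 = Metric.ball q 1 := by
    ext x; simp [dist_eq_norm]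
  rw [this] at h2
  exact h2

lemma integrable_inv_sq {d : ℕ} (hd : 3 ≤ d) {g : (Fin d → ℝ) → (Fin d → ℝ)} (hc : Continuous g)
    (hg : ∀ q, g q = 0 → ∃ g' : (Fin d → ℝ) →L[ℝ] (Fin d → ℝ),
      HasFDerivAt g g' q ∧ Function.Injective g') :
    Integrable (fun q => (‖g q‖ ^ 2)⁻¹) (nu d) ∧ ∀ᵐ q ∂(nu d), g q ≠ 0 := by
  have hm : Measurable (fun q => (‖g q‖ ^ 2)⁻¹) := by
    have := hc.measurable
    fun_prop
  constructor
  · have hl : LocallyIntegrable (fun q => (‖g q‖ ^ 2)⁻¹) volume := by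
      intro q
      by_cases hq : g q = 0
      · obtain ⟨g', h1, h2⟩ := hg q hq
        obtain ⟨c, hc0, hcl⟩ := local_lower hq h1 h2
        refine Asymptotics.IsBigO.integrableAtFilter ?_
          (hm.stronglyMeasurable.stronglyMeasurableAtFilter) (integrableAt_norm_inv_sq hd q)
        apply Asymptotics.IsBigO.of_bound (c ^ 2)⁻¹
        filter_upwards [hcl] with x hx
        rw [Real.norm_of_nonneg (by positivity), Real.norm_of_nonneg (by positivity), ← mul_inv,
          ← mul_pow]
        by_cases hxq : x = q
        · simp [hxq, hq]
        · have : 0 < ‖x - q‖ := norm_pos_iff.2 (sub_ne_zero.2 hxq)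
          apply inv_anti₀ (by positivity)
          gcongr
      · have hca : ContinuousAt (fun q => (‖g q‖ ^ 2)⁻¹) q := by
          apply ContinuousAt.inv₀ (by fun_prop)
          simpa using hq
        exact hca.integrableAtFilter hm.stronglyMeasurable.stronglyMeasurableAtFilter
          (volume.finiteAt_nhds q)
    rw [nu_eq]
    exact hl.integrableOn_isCompact isCompact_Icc
  · have h0 : volume {q | g q = 0} = 0 := by
      apply measure_null_of_locally_null
      intro q hq
      obtain ⟨g', h1, h2⟩ := hg q hq
      obtain ⟨c, hc0, hcl⟩ := local_lower hq h1 h2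
      have : Nonempty (Fin d) := ⟨⟨0, by omega⟩⟩
      refine ⟨{q}, ?_, measure_singleton q⟩
      rw [mem_nhdsWithin_iff_eventually]
      filter_upwards [hcl] with x hx hx0
      rw [hx0, norm_zero] at hx
      have : ‖x - q‖ ≤ 0 := by
        by_contra hcon
        push Not at hcon
        nlinarith [mul_pos hc0 hcon]
      simpa [sub_eq_zero] using this
    apply ae_restrict_of_ae
    rw [ae_iff]
    simpa using h0

lemma integrable_nu {d : ℕ} {X : Type*} [NormedAddCommGroup X] {f : (Fin d → ℝ) → X}
    (hf : Continuous f) : Integrable f (nu d) := by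
  rw [nu_eq]
  exact hf.integrableOn_Icc

lemma ae_mem_cubeQ (d : ℕ) : ∀ᵐ q ∂(nu d), q ∈ cubeQ d :=
  ae_restrict_mem (measurableSet_cubeQ d)

lemma exists_bound {d : ℕ} {f : (Fin d → ℝ) → ℝ} (hf : Continuous f) :
    ∃ C : ℝ, 0 ≤ C ∧ ∀ᵐ q ∂(nu d), |f q| ≤ C := by
  obtain ⟨C, hC⟩ := (isCompact_Icc (a := fun _ : Fin d => (-1/2 : ℝ))
    (b := fun _ => -1/2 + 1)).exists_bound_of_continuousOn hf.continuousOn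
  refine ⟨max C 0, le_max_right _ _, ?_⟩
  filter_upwards [ae_mem_cubeQ d] with q hq
  exact (hC q (cubeQ_subset d hq)).trans (le_max_left _ _)

/-- The Laplacian. -/
def lap {d : ℕ} (f : (Fin d → ℝ) → ℝ) (q : Fin d → ℝ) : ℝ := ∑ k, pd (pd f k) k q

lemma continuous_lap {d : ℕ} {f : (Fin d → ℝ) → ℝ} (hf : ContDiff ℝ 2 f) :
    Continuous (lap f) := by
  unfold lap
  exact continuous_finsetSum _ fun k _ => continuous_pd (contDiff_pd hf k) k

lemma continuous_gradSq {d : ℕ} {f : (Fin d → ℝ) → ℝ} (hf : ContDiff ℝ 2 f) :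
    Continuous (gradSq f) := by
  unfold gradSq
  exact continuous_finsetSum _ fun k _ => (continuous_pd (hf.of_le (by norm_num)) k).pow 2

lemma gradSq_nonneg {d : ℕ} (f : (Fin d → ℝ) → ℝ) (q) : 0 ≤ gradSq f q :=
  Finset.sum_nonneg fun _ _ => sq_nonneg _

lemma level_null {n : ℕ} {E : (Fin (n+1) → ℝ) → ℝ} (hE : ContDiff ℝ 2 E) (hEp : PerZ E)
    (hg : ∀ᵐ q ∂(nu (n+1)), gradSq E q ≠ 0) (μ : ℝ) : ∀ᵐ q ∂(nu (n+1)), E q ≠ μ := by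
  have cE : Continuous E := hE.continuous
  have cG := continuous_gradSq hE
  have cL := continuous_lap hE
  obtain ⟨D, hD0, hD⟩ := exists_bound cL
  have hS : MeasurableSet {q | E q = μ} := cE.measurable (measurableSet_singleton μ)
  have key : ∀ ε : ℝ, 0 < ε →
      ∫ q, Set.indicator {q | E q = μ} (gradSq E) q ∂(nu (n+1)) ≤
        ε * ((π / 2) * D * (nu (n+1)).real Set.univ) := by
    intro ε hε
    have hv := virial (w := fun _ => 1) hE contDiff_const hEp (fun _ _ => rfl)
      (F := fun t => ε * Real.arctan (t / ε)) (F' := fun t => 1 / (1 + (t / ε) ^ 2))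
      (contDiff_const.mul (Real.contDiff_arctan.comp (contDiff_id.div_const ε)))
      (fun t => by
        have h1 := ((Real.hasDerivAt_arctan (t / ε)).comp t
          ((hasDerivAt_id t).div_const ε)).const_mul ε
        refine HasDerivAt.congr_deriv h1 ?_
        field_simp) μ
    have hpd : ∀ k q, pd (fun _ : Fin (n+1) → ℝ => (1:ℝ)) k q = 0 := by
      intro k q; simp [pd]
    simp only [hpd, zero_mul, zero_add, one_mul] at hv
    have e1 : ∀ q, ∑ k, pd (pd E k) k q = lap E q := fun q => rfl
    simp only [e1] at hv
    have c1 : Continuous fun q => ε * Real.arctan ((E q - μ) / ε) * lap E q := by fun_prop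
    have c2 : Continuous fun q => gradSq E q * (1 / (1 + ((E q - μ) / ε) ^ 2)) := by
      apply cG.mul
      apply Continuous.div (by fun_prop) (by fun_prop)
      intro q; positivity
    rw [integral_add (integrable_nu c1) (integrable_nu c2)] at hv
    have h1 : ∫ q, Set.indicator {q | E q = μ} (gradSq E) q ∂(nu (n+1)) ≤
        ∫ q, gradSq E q * (1 / (1 + ((E q - μ) / ε) ^ 2)) ∂(nu (n+1)) := by
      apply integral_mono ((integrable_nu cG).indicator hS) (integrable_nu c2)
      intro q
      by_cases hq : E q = μ
      · simp [Set.indicator, hq]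
      · simp only [Set.indicator, Set.mem_ofPred_eq, hq, if_false]
        exact mul_nonneg (gradSq_nonneg _ _) (by positivity)
    have h2 : ‖∫ q, ε * Real.arctan ((E q - μ) / ε) * lap E q ∂(nu (n+1))‖ ≤
        (ε * (π / 2) * D) * (nu (n+1)).real Set.univ := by
      apply norm_integral_le_of_norm_le_const
      filter_upwards [hD] with q hq
      rw [norm_mul, norm_mul, Real.norm_of_nonneg hε.le]
      have : ‖Real.arctan ((E q - μ) / ε)‖ ≤ π / 2 := by
        rw [Real.norm_eq_abs, abs_le]
        exact ⟨(Real.neg_pi_div_two_lt_arctan _).le, (Real.arctan_lt_pi_div_two _).le⟩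
      have hq' : ‖lap E q‖ ≤ D := hq
      gcongr
    have h3 := neg_le_of_abs_le h2
    linarith
  have hz : ∫ q, Set.indicator {q | E q = μ} (gradSq E) q ∂(nu (n+1)) = 0 := by
    apply le_antisymm
    · set C := (π / 2) * D * (nu (n+1)).real Set.univ
      have hC : 0 ≤ C := by positivity
      apply le_of_forall_pos_le_add
      intro δ hδ
      have := key (δ / (C + 1)) (by positivity)
      refine this.trans ?_
      rw [zero_add, div_mul_eq_mul_div, div_le_iff₀ (by positivity)]
      nlinarith
    · exact integral_nonneg fun q => Set.indicator_nonneg (fun q _ => gradSq_nonneg E q) q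
  rw [integral_eq_zero_iff_of_nonneg
    (fun q => Set.indicator_nonneg (fun q _ => gradSq_nonneg E q) q)
    ((integrable_nu cG).indicator hS)] at hz
  filter_upwards [hz, hg] with q h1 h2 h3
  apply h2
  simpa [Set.indicator, h3] using h1

lemma core {n : ℕ} {E : (Fin (n+1) → ℝ) → ℝ} (hE : ContDiff ℝ 2 E) (hEp : PerZ E)
    (hg : ∀ᵐ q ∂(nu (n+1)), gradSq E q ≠ 0) (μ : ℝ)
    {Φ : (Fin (n+1) → ℝ) → ℂ} (hΦ : ContDiff ℝ 1 Φ) (hΦp : PerZ Φ)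
    {u : (Fin (n+1) → ℝ) → ℂ} (hu : MemLp u 2 (nu (n+1)))
    (heq : ∀ᵐ q ∂(nu (n+1)), ‖Φ q‖ = |E q - μ| * ‖u q‖)
    {P0 P1 B D : ℝ} (hP1 : 0 ≤ P1) (hB0 : 0 ≤ B) (hD0 : 0 ≤ D)
    (h0 : ∀ q, ‖Φ q‖ ≤ P0) (h1 : ∀ q k, ‖fderiv ℝ Φ q (Pi.single k 1)‖ ≤ P1)
    (hB : ∀ᵐ q ∂(nu (n+1)), ∀ k, |pd E k q| ≤ B) (hD : ∀ᵐ q ∂(nu (n+1)), |lap E q| ≤ D) :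
    ∫ q, gradSq E q * ‖u q‖ ^ 2 ∂(nu (n+1)) ≤
      (2 * (n + 1) * P1 * B + P0 * D) * ∫ q, ‖u q‖ ∂(nu (n+1)) := by
  have cE : Continuous E := hE.continuous
  have cG := continuous_gradSq hE
  have cL := continuous_lap hE
  have hnull := level_null hE hEp hg μ
  have iu : Integrable u (nu (n+1)) := hu.integrable (by norm_num)
  have iu2 : Integrable (fun q => ‖u q‖ ^ 2) (nu (n+1)) := hu.integrable_norm_pow two_ne_zero
  obtain ⟨G, hG0, hG⟩ := exists_bound cG
  have iGu : Integrable (fun q => gradSq E q * ‖u q‖ ^ 2) (nu (n+1)) :=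
    iu2.bdd_mul cG.aestronglyMeasurable (c := G) hG
  let w : (Fin (n+1) → ℝ) → ℝ := fun q => ‖Φ q‖ ^ 2
  have hw : ContDiff ℝ 1 w := hΦ.norm_sq ℝ
  have hpw : ∀ k q, |pd w k q| ≤ 2 * ‖Φ q‖ * P1 := by
    intro k q
    have h := ((hΦ.differentiable one_ne_zero q).hasFDerivAt).norm_sq
    unfold pd
    rw [show fderiv ℝ w q = _ from h.fderiv]
    simp only [smul_apply, ContinuousLinearMap.comp_apply, innerSL_apply_apply,
      nsmul_eq_mul]
    have := abs_real_inner_le_norm (Φ q) (fderiv ℝ Φ q (Pi.single k 1))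
    have h3 := h1 q k
    rw [abs_mul]
    have h4 : |inner ℝ (Φ q) (fderiv ℝ Φ q (Pi.single k 1))| ≤ ‖Φ q‖ * P1 :=
      this.trans (by gcongr)
    rw [show |((2:ℕ):ℝ)| = 2 by norm_num]
    linarith
  -- regularized identity
  let ep : ℕ → ℝ := fun m => 1 / ((m : ℝ) + 1)
  have hep : ∀ m, 0 < ep m := fun m => by positivity
  let I : ℕ → (Fin (n+1) → ℝ) → ℝ := fun m q =>
    w q * gradSq E q * (((E q - μ) ^ 2 - ep m ^ 2) / ((E q - μ) ^ 2 + ep m ^ 2) ^ 2)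
  have hIle : ∀ m, ∫ q, I m q ∂(nu (n+1)) ≤
      (2 * (n + 1) * P1 * B + P0 * D) * ∫ q, ‖u q‖ ∂(nu (n+1)) := by
    intro m
    have hem := hep m
    set ε := ep m with hε
    have hden : ∀ t : ℝ, t ^ 2 + ε ^ 2 ≠ 0 := fun t => by positivity
    have hv := virial hE hw hEp (fun q m => by simp only [w, hΦp q m])
      (F := fun t => t / (t ^ 2 + ε ^ 2)) (F' := fun t => (ε ^ 2 - t ^ 2) / (t ^ 2 + ε ^ 2) ^ 2)
      (contDiff_id.div ((contDiff_id.pow 2).add contDiff_const) hden)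
      (fun t => by
        have := (hasDerivAt_id t).div (((hasDerivAt_id t).pow 2).add_const (ε ^ 2)) (hden t)
        refine HasDerivAt.congr_deriv this ?_
        simp only [id, Pi.pow_apply]
        congr 1
        push_cast
        ring) μ
    have cden : ∀ q, (E q - μ) ^ 2 + ε ^ 2 ≠ 0 := fun q => hden _
    have c1 : Continuous fun q => (E q - μ) / ((E q - μ) ^ 2 + ε ^ 2) *
        ∑ k, (pd w k q * pd E k q + w q * pd (pd E k) k q) := by
      apply Continuous.mul
      · exact Continuous.div (by fun_prop) (by fun_prop) cden
      · refine continuous_finsetSum _ fun k _ => ?_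
        exact ((continuous_pd hw k).mul (continuous_pd (hE.of_le (by norm_num)) k)).add
          (hw.continuous.mul (continuous_pd (contDiff_pd hE k) k))
    have c2 : Continuous fun q => w q * gradSq E q *
        ((ε ^ 2 - (E q - μ) ^ 2) / ((E q - μ) ^ 2 + ε ^ 2) ^ 2) := by
      apply Continuous.mul (hw.continuous.mul cG)
      exact Continuous.div (by fun_prop) (by fun_prop) fun q => pow_ne_zero 2 (cden q)
    rw [integral_add (integrable_nu c1) (integrable_nu c2)] at hv
    have hI : ∫ q, I m q ∂(nu (n+1)) = - ∫ q, w q * gradSq E q *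
        ((ε ^ 2 - (E q - μ) ^ 2) / ((E q - μ) ^ 2 + ε ^ 2) ^ 2) ∂(nu (n+1)) := by
      rw [← integral_neg]
      congr 1
      funext q
      simp only [I, ← hε]
      ring
    rw [hI, ← eq_neg_of_add_eq_zero_left hv, ← integral_const_mul]
    apply integral_mono_ae (integrable_nu c1) (iu.norm.const_mul _)
    filter_upwards [heq, hB, hD] with q hq hBq hDq
    have hF : |(E q - μ) / ((E q - μ) ^ 2 + ε ^ 2)| * ‖Φ q‖ ≤ ‖u q‖ := by
      rw [hq, abs_div, abs_of_pos (show 0 < (E q - μ) ^ 2 + ε ^ 2 by positivity), div_mul_eq_mul_div,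
        div_le_iff₀ (by positivity), ← mul_assoc, abs_mul_abs_self]
      nlinarith [norm_nonneg (u q), mul_nonneg (norm_nonneg (u q)) (sq_nonneg ε)]
    have hs : |∑ k, (pd w k q * pd E k q + w q * pd (pd E k) k q)| ≤
        ‖Φ q‖ * (2 * (n + 1) * P1 * B + P0 * D) := by
      rw [Finset.sum_add_distrib, ← Finset.mul_sum]
      have a1 : |∑ k, pd w k q * pd E k q| ≤ ∑ k : Fin (n+1), 2 * ‖Φ q‖ * P1 * B := by
        refine (Finset.abs_sum_le_sum_abs _ _).trans (Finset.sum_le_sum fun k _ => ?_)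
        rw [abs_mul]
        exact mul_le_mul (hpw k q) (hBq k) (abs_nonneg _) (by positivity)
      have a2 : |w q * ∑ k, pd (pd E k) k q| ≤ ‖Φ q‖ * P0 * D := by
        rw [abs_mul]
        have : |w q| ≤ ‖Φ q‖ * P0 := by
          simp only [w]
          rw [abs_of_nonneg (by positivity), pow_two]
          exact mul_le_mul_of_nonneg_left (h0 q) (norm_nonneg _)
        exact mul_le_mul this hDq (abs_nonneg _) ((abs_nonneg _).trans this)
      refine (abs_add_le _ _).trans ((add_le_add a1 a2).trans ?_)
      simp
      linarith
    have hC : 0 ≤ 2 * ((n:ℝ) + 1) * P1 * B + P0 * D := by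
      have := (norm_nonneg _).trans (h0 q)
      positivity
    refine (le_abs_self _).trans ?_
    rw [abs_mul]
    calc _ ≤ |(E q - μ) / ((E q - μ) ^ 2 + ε ^ 2)| * (‖Φ q‖ * (2 * (n + 1) * P1 * B + P0 * D)) := by
          gcongr
      _ ≤ _ := by
          rw [← mul_assoc, mul_comm _ ‖u q‖]
          gcongr
  have hlim : Filter.Tendsto (fun m => ∫ q, I m q ∂(nu (n+1))) Filter.atTop
      (nhds (∫ q, gradSq E q * ‖u q‖ ^ 2 ∂(nu (n+1)))) := by
    apply tendsto_integral_of_dominated_convergence (fun q => gradSq E q * ‖u q‖ ^ 2)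
    · intro m
      have hem := hep m
      have : Continuous (I m) := by
        apply Continuous.mul (hw.continuous.mul cG)
        exact Continuous.div (by fun_prop) (by fun_prop) fun q => by positivity
      exact this.aestronglyMeasurable
    · exact iGu
    · intro m
      have hem := hep m
      filter_upwards [heq] with q hq
      simp only [I, w, hq]
      set t := E q - μ
      have e1 : (|t| * ‖u q‖) ^ 2 * gradSq E q * ((t ^ 2 - ep m ^ 2) / (t ^ 2 + ep m ^ 2) ^ 2) =
          (gradSq E q * ‖u q‖ ^ 2) * (t ^ 2 * (t ^ 2 - ep m ^ 2) / (t ^ 2 + ep m ^ 2) ^ 2) := by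
        rw [mul_pow, sq_abs]; ring
      have hg0 : 0 ≤ gradSq E q * ‖u q‖ ^ 2 := mul_nonneg (gradSq_nonneg _ _) (by positivity)
      rw [e1, norm_mul, Real.norm_of_nonneg hg0]
      apply mul_le_of_le_one_right hg0
      rw [Real.norm_eq_abs, abs_div, abs_of_pos (show 0 < (t ^ 2 + ep m ^ 2) ^ 2 by positivity),
        div_le_one (by positivity), abs_mul, abs_of_nonneg (sq_nonneg t), pow_two (t ^ 2 + _)]
      apply mul_le_mul _ _ (abs_nonneg _) (by positivity)
      · nlinarith
      · rw [abs_le]; constructor <;> nlinarith [sq_nonneg t, sq_nonneg (ep m)]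
    · filter_upwards [heq, hnull] with q hq hne
      have ht : E q - μ ≠ 0 := sub_ne_zero.2 hne
      simp only [I, w, hq]
      have hl : Filter.Tendsto ep Filter.atTop (nhds 0) := tendsto_one_div_add_atTop_nhds_zero_nat
      have : Filter.Tendsto (fun m => (|E q - μ| * ‖u q‖) ^ 2 * gradSq E q *
          (((E q - μ) ^ 2 - ep m ^ 2) / ((E q - μ) ^ 2 + ep m ^ 2) ^ 2)) Filter.atTop
          (nhds ((|E q - μ| * ‖u q‖) ^ 2 * gradSq E q *
          (((E q - μ) ^ 2 - 0 ^ 2) / ((E q - μ) ^ 2 + 0 ^ 2) ^ 2))) := by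
        apply Filter.Tendsto.const_mul
        apply Filter.Tendsto.div
        · exact tendsto_const_nhds.sub (hl.pow 2)
        · exact (tendsto_const_nhds.add (hl.pow 2)).pow 2
        · positivity
      convert this using 2
      rw [mul_pow, sq_abs]
      field_simp
      ring
  exact le_of_tendsto' hlim hIle

lemma abs_le_lnorm {d : ℕ} (x : Γd d) (i : Fin d) : |(x i : ℝ)| ≤ lnorm x := by
  unfold lnorm
  apply Real.abs_le_sqrt
  exact Finset.single_le_sum (f := fun i => ((x i : ℝ)) ^ 2) (fun j _ => sq_nonneg _)
    (Finset.mem_univ i)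

lemma lnorm_nonneg {d : ℕ} (x : Γd d) : 0 ≤ lnorm x := Real.sqrt_nonneg _

/-- The real phase of the plane wave as a linear map. -/
def phase {d : ℕ} (x : Γd d) : (Fin d → ℝ) →L[ℝ] ℂ :=
  Complex.ofRealCLM.comp ((2 * π) • ∑ i, (x i : ℝ) • ContinuousLinearMap.proj (R := ℝ) (φ := fun _ : Fin d => ℝ) i)

lemma phase_apply {d : ℕ} (x : Γd d) (q : Fin d → ℝ) :
    phase x q = ((2 * π * dotZ q x : ℝ) : ℂ) := by
  simp [phase, dotZ, mul_comm]

lemma norm_phase_le {d : ℕ} (x : Γd d) : ‖phase x‖ ≤ 2 * π * d * lnorm x := by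
  have hl := lnorm_nonneg x
  apply ContinuousLinearMap.opNorm_le_bound _ (by positivity)
  intro q
  rw [phase_apply, Complex.norm_real, Real.norm_eq_abs, abs_mul, abs_of_pos Real.two_pi_pos]
  have : |dotZ q x| ≤ d * lnorm x * ‖q‖ := by
    unfold dotZ
    refine (Finset.abs_sum_le_sum_abs _ _).trans ?_
    have : ∀ i ∈ Finset.univ, |q i * (x i : ℝ)| ≤ lnorm x * ‖q‖ := by
      intro i _
      rw [abs_mul, mul_comm]
      exact mul_le_mul (abs_le_lnorm x i) (norm_le_pi_norm q i) (abs_nonneg _) hl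
    refine (Finset.sum_le_sum this).trans ?_
    simp [mul_assoc]
  have := mul_le_mul_of_nonneg_left this Real.two_pi_pos.le
  linarith

lemma hasFDerivAt_chi {d : ℕ} (x : Γd d) (q : Fin d → ℝ) :
    HasFDerivAt (chi x) ((chi x q * Complex.I) • phase x) q := by
  have h1 : HasFDerivAt (fun q => phase x q * Complex.I) (Complex.I • phase x) q := by
    have := (phase x).hasFDerivAt (x := q) |>.mul_const Complex.I
    exact this
  have h2 := h1.cexp
  simp only [phase_apply] at h2
  rw [smul_smul] at h2
  exact h2

lemma perZ_chi {d : ℕ} (x : Γd d) : PerZ (chi x) := by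
  intro q m
  unfold chi
  have : ((2 * π * dotZ (q + fun i => (m i : ℝ)) x : ℝ) : ℂ) * Complex.I =
      ((2 * π * dotZ q x : ℝ) : ℂ) * Complex.I
        + ((∑ i, m i * x i : ℤ) : ℂ) * (2 * π * Complex.I) := by
    simp only [dotZ, Pi.add_apply, add_mul, Finset.sum_add_distrib]
    push_cast
    ring
  rw [this, Complex.exp_add, Complex.exp_int_mul_two_pi_mul_I, mul_one]

/-- The trigonometric series with coefficients `a`. -/
def ser {d : ℕ} (a : Γd d → ℂ) (q : Fin d → ℝ) : ℂ := ∑' x, a x * chi x q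

lemma perZ_ser {d : ℕ} (a : Γd d → ℂ) : PerZ (ser a) := by
  intro q m
  unfold ser
  simp only [perZ_chi _ q m]


lemma sum_a {d : ℕ} {a : Γd d → ℂ} (ha : Summable fun x => ‖a x‖ * (1 + lnorm x))
    : Summable fun x => ‖a x‖ := by
  refine Summable.of_nonneg_of_le (fun _ => norm_nonneg _) (fun x => ?_) ha
  nlinarith [norm_nonneg (a x), lnorm_nonneg x, mul_nonneg (norm_nonneg (a x)) (lnorm_nonneg x)]

lemma norm_deriv_le {d : ℕ} (a : Γd d → ℂ)
    (q : Fin d → ℝ) (x : Γd d) :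
    ‖(a x * (chi x q * Complex.I)) • phase x‖ ≤ 2 * π * d * (‖a x‖ * (1 + lnorm x)) := by
  rw [norm_smul, norm_mul, norm_mul, norm_chi, Complex.norm_I, mul_one, mul_one]
  have h := mul_le_mul_of_nonneg_left (norm_phase_le x) (norm_nonneg (a x))
  refine h.trans ?_
  have : 0 ≤ 2 * π * d * ‖a x‖ := by positivity
  nlinarith

lemma hasFDerivAt_ser {d : ℕ} {a : Γd d → ℂ} (ha : Summable fun x => ‖a x‖ * (1 + lnorm x))
    (q : Fin d → ℝ) :
    HasFDerivAt (ser a) (∑' x, (a x * (chi x q * Complex.I)) • phase x) q := by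
  unfold ser
  refine hasFDerivAt_tsum (u := fun x => 2 * π * d * (‖a x‖ * (1 + lnorm x)))
    (f' := fun x q => (a x * (chi x q * Complex.I)) • phase x) (x₀ := q)
    (ha.mul_left _) ?_ (fun x q => norm_deriv_le a q x) ?_ q
  · intro x q
    have := (hasFDerivAt_chi x q).const_mul (a x)
    rw [smul_smul] at this
    exact this
  · apply Summable.of_norm
    simpa [norm_chi] using sum_a ha

lemma contDiff_ser {d : ℕ} {a : Γd d → ℂ} (ha : Summable fun x => ‖a x‖ * (1 + lnorm x))
    : ContDiff ℝ 1 (ser a) := by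
  rw [contDiff_one_iff_fderiv]
  refine ⟨fun q => (hasFDerivAt_ser ha q).differentiableAt, ?_⟩
  have : fderiv ℝ (ser a) = fun q => ∑' x, (a x * (chi x q * Complex.I)) • phase x :=
    funext fun q => (hasFDerivAt_ser ha q).fderiv
  rw [this]
  refine continuous_tsum (fun x => ?_) (ha.mul_left (2 * π * d)) (fun x q => norm_deriv_le a q x)
  have := continuous_chi x
  fun_prop

lemma norm_ser_le {d : ℕ} {a : Γd d → ℂ} (ha : Summable fun x => ‖a x‖ * (1 + lnorm x))
    (q : Fin d → ℝ) : ‖ser a q‖ ≤ ∑' x, ‖a x‖ * (1 + lnorm x) := by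
  unfold ser
  refine tsum_of_norm_bounded ha.hasSum fun x => ?_
  rw [norm_mul, norm_chi, mul_one]
  nlinarith [norm_nonneg (a x), lnorm_nonneg x, mul_nonneg (norm_nonneg (a x)) (lnorm_nonneg x)]

lemma norm_fderiv_ser_le {d : ℕ} {a : Γd d → ℂ} (ha : Summable fun x => ‖a x‖ * (1 + lnorm x))
    (q : Fin d → ℝ) (k : Fin d) :
    ‖fderiv ℝ (ser a) q (Pi.single k 1)‖ ≤ 2 * π * d * ∑' x, ‖a x‖ * (1 + lnorm x) := by
  have h1 : ‖fderiv ℝ (ser a) q‖ ≤ 2 * π * d * ∑' x, ‖a x‖ * (1 + lnorm x) := by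
    rw [(hasFDerivAt_ser ha q).fderiv, ← tsum_mul_left]
    exact tsum_of_norm_bounded (ha.mul_left (2 * π * d)).hasSum fun x => norm_deriv_le a q x
  refine (ContinuousLinearMap.le_opNorm _ _).trans ?_
  have : ‖(Pi.single k 1 : Fin d → ℝ)‖ = 1 := by rw [Pi.norm_single, norm_one]
  rw [this, mul_one]
  exact h1

lemma coeff_ser {d : ℕ} {a : Γd d → ℂ} (ha : Summable fun x => ‖a x‖ * (1 + lnorm x))
    (y : Γd d) : ∫ q, chi (-y) q * ser a q ∂(nu d) = a y := by
  have h := hasSum_integral_of_summable_integral_norm (μ := nu d)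
    (F := fun x q => chi (-y) q * (a x * chi x q))
    (fun x => integrable_nu ((continuous_chi _).mul (continuous_const.mul (continuous_chi x))))
    (by
      simp only [norm_mul, norm_chi, one_mul, mul_one, integral_const, smul_eq_mul]
      exact (sum_a ha).mul_left _)
  have h1 : ∀ x, ∫ q, chi (-y) q * (a x * chi x q) ∂(nu d) = if x = y then a x else 0 := by
    intro x
    have : ∀ q, chi (-y) q * (a x * chi x q) = a x * chi (-y + x) q := by
      intro q; rw [chi_add]; ring
    simp only [this]
    rw [integral_const_mul, integral_chi]
    by_cases hxy : x = y
    · simp [hxy]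
    · have : -y + x ≠ 0 := fun h => hxy (neg_add_eq_zero.1 h).symm
      simp [hxy, this]
  simp only [h1, tsum_mul_left] at h
  exact h.unique (hasSum_ite_eq y (a y) |>.congr_fun (fun x => by
    by_cases hxy : x = y <;> simp [hxy]))



/-- The rescaled dispersion relation. -/
def resc {d : ℕ} (e : (Fin d → ℝ) → ℝ) (q : Fin d → ℝ) : ℝ := e ((-(2 * π)) • q)

open scoped Pointwise in
lemma smul_cube (d : ℕ) : (-(2 * π)) • Set.Icc (fun _ : Fin d => (-1/2 : ℝ)) (fun _ => -1/2 + 1)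
    = torusBox d := by
  have hpi := Real.pi_pos
  have hne : (-(2 * π)) ≠ 0 := by simp [hpi.ne']
  ext p
  rw [Set.mem_smul_set_iff_inv_smul_mem₀ hne]
  simp only [torusBox, Set.mem_Icc, Pi.le_def, Set.mem_pi, Set.mem_univ, true_implies,
    Pi.smul_apply, smul_eq_mul, ← forall_and]
  apply forall_congr'
  intro i
  have e1 : (-(2 * π))⁻¹ * p i = - (p i / (2 * π)) := by field_simp
  rw [e1]
  have h : p i = (p i / (2 * π)) * (2 * π) := by field_simp
  constructor
  · rintro ⟨h1, h2⟩
    constructor <;> nlinarith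
  · rintro ⟨h1, h2⟩
    constructor
    · have : p i / (2 * π) ≤ 1 / 2 := by rw [div_le_iff₀ (by positivity)]; linarith
      linarith
    · have : -1 / 2 ≤ p i / (2 * π) := by rw [le_div_iff₀ (by positivity)]; linarith
      linarith

lemma fCoeff_eq {d : ℕ} (e : (Fin d → ℝ) → ℝ) (m : Γd d) :
    fCoeff e m = ∫ q, chi (-m) q * (resc e q : ℂ) ∂(nu d) := by
  have hpi := Real.pi_pos
  have hne : (-(2 * π)) ≠ 0 := by simp [hpi.ne']
  have h := Measure.setIntegral_comp_smul (volume : Measure (Fin d → ℝ))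
    (fun p => (e p : ℂ) * Complex.exp (Complex.I * (dotZ p m : ℝ)))
    (Set.Icc (fun _ : Fin d => (-1/2 : ℝ)) (fun _ => -1/2 + 1)) hne
  rw [smul_cube] at h
  have h2 : |((-(2 * π)) ^ Module.finrank ℝ (Fin d → ℝ))⁻¹| = 1 / (2 * π) ^ d := by
    rw [abs_inv, abs_pow, abs_neg, abs_of_pos Real.two_pi_pos, Module.finrank_fin_fun, one_div]
  rw [h2, Complex.real_smul] at h
  rw [fCoeff, ← h, nu_eq]
  congr 1
  ext q
  rw [mul_comm]
  unfold chi resc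
  congr 2
  rw [dotZ_neg]
  have : dotZ ((-(2 * π)) • q) m = -(2 * π) * dotZ q m := by
    simp only [dotZ, Pi.smul_apply, smul_eq_mul, Finset.mul_sum, mul_assoc]
  rw [this]
  push_cast
  ring

lemma memLp_mul {d : ℕ} {E : (Fin d → ℝ) → ℝ} (hE : Continuous E) {f : (Fin d → ℝ) → ℂ}
    (hf : MemLp f 2 (nu d)) : MemLp (fun q => (E q : ℂ) * f q) 2 (nu d) := by
  obtain ⟨C, hC0, hC⟩ := exists_bound hE
  refine hf.of_le_mul (c := C)
    ((Complex.continuous_ofReal.comp hE).aestronglyMeasurable.mul hf.1) ?_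
  filter_upwards [hC] with q hq
  rw [norm_mul, Complex.norm_real]
  exact mul_le_mul_of_nonneg_right hq (norm_nonneg _)

lemma inner_Echi {d : ℕ} {E : (Fin d → ℝ) → ℝ} (hE : Continuous E) (x : Γd d)
    (f : Lp ℂ 2 (nu d)) :
    inner ℂ ((memLp_mul hE (memLp_chi x)).toLp _) f
      = ∫ q, chi (-x) q * ((E q : ℂ) * f q) ∂(nu d) := by
  rw [MeasureTheory.L2.inner_def]
  apply integral_congr_ae
  filter_upwards [(memLp_mul hE (memLp_chi x)).coeFn_toLp] with q hq
  rw [hq, chi_neg, RCLike.inner_apply, map_mul, Complex.conj_ofReal]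
  ring

lemma hop_apply {d : ℕ} {e : (Fin d → ℝ) → ℝ} (he : Continuous e) {H : L2 d →L[ℂ] L2 d}
    (hH : IsMultiplier e H) (ψ : L2 d) (x : Γd d) :
    (H ψ : ∀ _ : Γd d, ℂ) x
      = ∫ q, chi (-x) q * ((resc e q : ℂ) * ((chiBasis d).repr.symm ψ : Lp ℂ 2 (nu d)) q) ∂(nu d) := by
  have hE : Continuous (resc e) := he.comp (continuous_const_smul _)
  have h1 : (H ψ : ∀ _ : Γd d, ℂ) x = ⟪delta x, H ψ⟫ := by
    rw [delta, lp.inner_single_left]; simp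
  rw [h1, ← inner_Echi hE]
  have s1 : HasSum (fun y => (ψ : ∀ _ : Γd d, ℂ) y • (delta y : L2 d)) ψ := by
    have := lp.hasSum_single (p := 2) (by norm_num) ψ
    convert this using 2 with y
    rw [delta, ← lp.single_smul, smul_eq_mul, mul_one]
  have s1' := s1.mapL ((innerSL ℂ (delta x : L2 d)).comp H)
  have s2 := ((chiBasis d).hasSum_repr_symm ψ).mapL
    (innerSL ℂ ((memLp_mul hE (memLp_chi x)).toLp _))
  refine s1'.unique ?_
  refine s2.congr_fun (fun y => ?_)
  rw [map_smul, map_smul, coe_chiBasis]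
  congr 1
  rw [ContinuousLinearMap.comp_apply, innerSL_apply_apply, innerSL_apply_apply, hH, fCoeff_eq,
    inner_Echi hE]
  apply integral_congr_ae
  filter_upwards [(memLp_chi y).coeFn_toLp] with q hq
  rw [chiLp, hq, show -(x - y) = -x + y by abel, chi_add]
  ring

lemma repr_eq {d : ℕ} (ψ : L2 d) (x : Γd d) :
    (ψ : ∀ _ : Γd d, ℂ) x
      = ∫ q, chi (-x) q * ((chiBasis d).repr.symm ψ : Lp ℂ 2 (nu d)) q ∂(nu d) := by
  rw [← inner_chiLp, ← coe_chiBasis, ← HilbertBasis.repr_apply_apply,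
    LinearIsometryEquiv.apply_symm_apply]

lemma norm_coeff_le {d : ℕ} (ψ : L2 d) (x : Γd d) :
    ‖(ψ : ∀ _ : Γd d, ℂ) x‖
      ≤ ∫ q, ‖((chiBasis d).repr.symm ψ : Lp ℂ 2 (nu d)) q‖ ∂(nu d) := by
  rw [repr_eq]
  refine (norm_integral_le_integral_norm _).trans (le_of_eq ?_)
  simp only [norm_mul, norm_chi, one_mul]

lemma eigen_eq {d : ℕ} {e : (Fin d → ℝ) → ℝ} (he : Continuous e) {V : Γd d → ℝ}
    {H M : L2 d →L[ℂ] L2 d}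
    (hH : IsMultiplier e H) (hM : IsMulOp V M) {ψ : L2 d} {μ : ℝ}
    (h : (H + M) ψ = (μ : ℂ) • ψ)
    (ha : Summable fun x => ‖(V x : ℂ) * (ψ : ∀ _ : Γd d, ℂ) x‖ * (1 + lnorm x)) :
    ∀ᵐ q ∂(nu d), ‖ser (fun x => (V x : ℂ) * (ψ : ∀ _ : Γd d, ℂ) x) q‖
      = |resc e q - μ| * ‖((chiBasis d).repr.symm ψ : Lp ℂ 2 (nu d)) q‖ := by
  have hE : Continuous (resc e) := he.comp (continuous_const_smul _)
  set u : Lp ℂ 2 (nu d) := (chiBasis d).repr.symm ψ with hu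
  set a : Γd d → ℂ := fun x => (V x : ℂ) * (ψ : ∀ _ : Γd d, ℂ) x with had
  have cs : Continuous (ser a) := (contDiff_ser ha).continuous
  have m1 : MemLp (fun q => ((resc e q : ℝ) : ℂ) * u q) 2 (nu d) := memLp_mul hE (Lp.memLp u)
  have m2 : MemLp (fun q => (μ : ℂ) * u q) 2 (nu d) := (Lp.memLp u).const_mul _
  have m3 : MemLp (ser a) 2 (nu d) :=
    MemLp.of_bound cs.aestronglyMeasurable _ (Filter.Eventually.of_forall (norm_ser_le ha))
  have m4 := (m1.sub m2).add m3
  have key : m4.toLp _ = 0 := by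
    apply complete_chi
    intro x
    have ic : ∀ {f : (Fin d → ℝ) → ℂ}, MemLp f 2 (nu d) →
        Integrable (fun q => chi (-x) q * f q) (nu d) := fun hf =>
      (hf.integrable (by norm_num)).bdd_mul (c := 1) (continuous_chi _).aestronglyMeasurable
        (Filter.Eventually.of_forall fun q => (norm_chi _ q).le)
    have : ∫ q, chi (-x) q * (m4.toLp _ : Lp ℂ 2 (nu d)) q ∂(nu d)
        = ∫ q, ((chi (-x) q * (((resc e q : ℝ) : ℂ) * u q) - chi (-x) q * ((μ : ℂ) * u q))
          + chi (-x) q * ser a q) ∂(nu d) := by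
      apply integral_congr_ae
      filter_upwards [m4.coeFn_toLp] with q hq
      rw [hq]
      simp only [Pi.add_apply, Pi.sub_apply]
      ring
    have ii : Integrable (fun q => chi (-x) q * (((resc e q : ℝ) : ℂ) * u q) - chi (-x) q * ((μ : ℂ) * u q)) (nu d) :=
      (ic m1).sub (ic m2)
    rw [this, integral_add ii (ic m3), integral_sub (ic m1) (ic m2),
      coeff_ser ha, ← hop_apply he hH]
    have e2 : ∫ q, chi (-x) q * ((μ : ℂ) * u q) ∂(nu d) = μ * (ψ : ∀ _ : Γd d, ℂ) x := by
      rw [repr_eq, ← integral_const_mul]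
      congr 1; ext q; ring
    rw [e2]
    have h3 := congrArg (fun φ : L2 d => (φ : ∀ _ : Γd d, ℂ) x) h
    simp only [_root_.add_apply, lp.coeFn_add, Pi.add_apply, lp.coeFn_smul,
      Pi.smul_apply, smul_eq_mul, hM ψ x] at h3
    rw [← h3]; ring
  have h0 : (m4.toLp _ : Lp ℂ 2 (nu d)) =ᵐ[nu d] 0 := by rw [key]; exact Lp.coeFn_zero _ _ _
  filter_upwards [h0, m4.coeFn_toLp] with q hq1 hq2
  rw [hq2] at hq1
  simp only [Pi.add_apply, Pi.sub_apply, Pi.zero_apply] at hq1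
  have : ser a q = -(((resc e q - μ : ℝ) : ℂ) * u q) := by
    push_cast
    linear_combination hq1
  rw [this, norm_neg, norm_mul, Complex.norm_real, Real.norm_eq_abs]

lemma phi_bound {d : ℕ} {V : Γd d → ℝ} {c : ℝ} (hc : 0 < c)
    (h : Phi 2 2 V < ENNReal.ofReal c) :
    (Summable fun x => |V x| * (1 + lnorm x)) ∧ ∑' x, |V x| * (1 + lnorm x) < c := by
  have hn : ∀ x, 0 ≤ |V x| * (1 + lnorm x) := fun x =>
    mul_nonneg (abs_nonneg _) (by linarith [lnorm_nonneg x])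
  let b : Γd d → ℝ≥0∞ := fun x => ENNReal.ofReal (|V x| ^ ((1 : ℝ) / (2 : ℕ)) * (1 + lnorm x) ^ 2)
  have hb : ∀ x, ENNReal.ofReal (|V x| * (1 + lnorm x)) ≤ b x * b x := by
    intro x
    have hl := lnorm_nonneg x
    have hs : |V x| ^ ((1 : ℝ) / (2 : ℕ)) = Real.sqrt |V x| := by
      rw [Real.sqrt_eq_rpow]; norm_num
    simp only [b]
    rw [hs, ← ENNReal.ofReal_mul (by positivity)]
    apply ENNReal.ofReal_le_ofReal
    have h1 : Real.sqrt |V x| * (1 + lnorm x) ^ 2 * (Real.sqrt |V x| * (1 + lnorm x) ^ 2)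
        = |V x| * (1 + lnorm x) ^ 4 := by
      have := Real.mul_self_sqrt (abs_nonneg (V x))
      linear_combination (1 + lnorm x) ^ 4 * this
    rw [h1]
    apply mul_le_mul_of_nonneg_left _ (abs_nonneg _)
    exact le_self_pow₀ (by linarith) (by norm_num)
  have hle : ∑' x, ENNReal.ofReal (|V x| * (1 + lnorm x)) ≤ Phi 2 2 V := by
    unfold Phi
    change _ ≤ (∑' x, b x) ^ 2
    rw [sq, ← ENNReal.tsum_mul_right]
    exact ENNReal.tsum_le_tsum fun x => (hb x).trans (mul_le_mul_right (ENNReal.le_tsum x) _)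
  have hlt := hle.trans_lt h
  have hsum : Summable fun x => |V x| * (1 + lnorm x) := by
    have := ENNReal.summable_toReal (hlt.trans ENNReal.ofReal_lt_top).ne
    simpa only [ENNReal.toReal_ofReal (hn _)] using this
  refine ⟨hsum, ?_⟩
  rw [← ENNReal.ofReal_tsum_of_nonneg hn hsum] at hlt
  exact (ENNReal.ofReal_lt_ofReal_iff hc).1 hlt

lemma contDiff_resc {d : ℕ} {e : (Fin d → ℝ) → ℝ} (he : ContDiff ℝ 2 e) :
    ContDiff ℝ 2 (resc e) := by
  unfold resc
  exact he.comp (contDiff_const_smul _)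

lemma perZ_resc {d : ℕ} {e : (Fin d → ℝ) → ℝ} (he : Periodic2pi e) : PerZ (resc e) := by
  intro q m
  unfold resc
  rw [← he ((-(2 * π)) • q) (-m)]
  congr 1
  ext i
  simp only [Pi.smul_apply, Pi.add_apply, Pi.neg_apply, smul_eq_mul, Int.cast_neg]
  ring

lemma pd_resc {d : ℕ} (e : (Fin d → ℝ) → ℝ) (k : Fin d) (q : Fin d → ℝ) :
    pd (resc e) k q = -(2 * π) * pd e k ((-(2 * π)) • q) := by
  unfold pd resc
  rw [fderiv_comp_smul]
  simp

lemma resc_morse {d : ℕ} {e : (Fin d → ℝ) → ℝ} (he : ContDiff ℝ 2 e) (hM : IsMorse e)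
    (q : Fin d → ℝ) (hq : (fun k => pd (resc e) k q) = 0) :
    ∃ g' : (Fin d → ℝ) →L[ℝ] (Fin d → ℝ),
      HasFDerivAt (fun q => fun k => pd (resc e) k q) g' q ∧ Function.Injective g' := by
  have hpi : (-(2 * π)) ≠ 0 := by simp [Real.pi_pos.ne']
  set p := (-(2 * π)) • q with hp
  have hcrit : fderiv ℝ e p = 0 := by
    apply ContinuousLinearMap.coe_injective
    apply LinearMap.pi_ext'
    intro k
    ext
    have := congrFun hq k
    simp only [pd_resc, Pi.zero_apply, mul_eq_zero, hpi, false_or] at this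
    rw [← hp] at this
    simpa [pd] using this
  have hdet := hM p hcrit
  have hd : ∀ k, HasFDerivAt (fun q => pd (resc e) k q)
      ((-(2 * π)) • ((-(2 * π)) • fderiv ℝ (pd e k) p)) q := by
    intro k
    have h1 : (fun q => pd (resc e) k q) = fun q => -(2 * π) * pd e k ((-(2 * π)) • q) :=
      funext fun q => pd_resc e k q
    rw [h1]
    have h2 : DifferentiableAt ℝ (pd e k) p := (contDiff_pd he k).differentiable one_ne_zero p
    have h3 : HasFDerivAt (fun q => pd e k ((-(2 * π)) • q)) ((-(2 * π)) • fderiv ℝ (pd e k) p) q := by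
      have h4 : HasFDerivAt (fun q : Fin d → ℝ => (-(2 * π)) • q)
        ((-(2 * π)) • ContinuousLinearMap.id ℝ (Fin d → ℝ)) q :=
        ((-(2 * π)) • ContinuousLinearMap.id ℝ (Fin d → ℝ)).hasFDerivAt
      have := HasFDerivAt.comp q h2.hasFDerivAt h4
      have h6 : (-(2 * π)) • fderiv ℝ (pd e k) p = (fderiv ℝ (pd e k) p).comp
          ((-(2 * π)) • ContinuousLinearMap.id ℝ (Fin d → ℝ)) := by
        ext v
        simp
      rw [h6]
      exact this
    exact h3.const_mul _
  refine ⟨_, hasFDerivAt_pi.2 hd, ?_⟩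
  rw [injective_iff_map_eq_zero]
  intro v hv
  have h0 : ∀ k, fderiv ℝ (pd e k) p v = 0 := by
    intro k
    have := congrFun hv k
    simpa [Real.pi_pos.ne'] using this
  apply Matrix.eq_zero_of_vecMul_eq_zero hdet
  ext j
  rw [Matrix.vecMul, dotProduct, Pi.zero_apply, ← h0 j]
  conv_rhs => rw [pi_eq_sum_univ' v, map_sum]
  apply Finset.sum_congr rfl
  intro i _
  rw [map_smul, smul_eq_mul]
  simp only [hess, Matrix.of_apply]
  rfl

lemma norm_sq_le_gradSq {d : ℕ} (f : (Fin d → ℝ) → ℝ) (q : Fin d → ℝ) :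
    ‖fun k => pd f k q‖ ^ 2 ≤ gradSq f q := by
  have h : ‖fun k => pd f k q‖ ≤ Real.sqrt (gradSq f q) := by
    rw [pi_norm_le_iff_of_nonneg (Real.sqrt_nonneg _)]
    intro k
    apply Real.abs_le_sqrt
    exact Finset.single_le_sum (f := fun k => pd f k q ^ 2) (fun _ _ => sq_nonneg _)
      (Finset.mem_univ k)
  calc _ ≤ Real.sqrt (gradSq f q) ^ 2 := by gcongr
    _ = _ := Real.sq_sqrt (gradSq_nonneg f q)

lemma amgm {r s G t : ℝ} (hr : 0 < r) (hs : 0 < s) (hG : r ≤ G) :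
    t ≤ s / 2 * (G * t ^ 2) + 1 / (2 * s) * r⁻¹ := by
  have h1 : t ≤ s / 2 * (r * t ^ 2) + 1 / (2 * s) * r⁻¹ := by
    have : s / 2 * (r * t ^ 2) + 1 / (2 * s) * r⁻¹ - t = (s * r * t - 1) ^ 2 / (2 * s * r) := by
      field_simp
      ring
    have h2 : 0 ≤ (s * r * t - 1) ^ 2 / (2 * s * r) := by positivity
    linarith
  have h3 : s / 2 * (r * t ^ 2) ≤ s / 2 * (G * t ^ 2) := by gcongr
  linarith

lemma no_eig {n : ℕ} (hd : 3 ≤ n + 1) {e : (Fin (n+1) → ℝ) → ℝ} (he : Periodic2pi e)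
    (heC : ContDiff ℝ 2 e) (heM : IsMorse e) :
    ∃ c : ℝ, 0 < c ∧
      ∀ (V : Γd (n+1) → ℝ) (Hop Mv : L2 (n+1) →L[ℂ] L2 (n+1)),
        IsMultiplier e Hop → IsMulOp V Mv →
        Phi 2 2 V < ENNReal.ofReal c → ∀ (ψ : L2 (n+1)) (μ : ℝ),
        (Hop + Mv) ψ = (μ : ℂ) • ψ → ψ = 0 := by
  set E := resc e with hEdef
  have hE : ContDiff ℝ 2 E := contDiff_resc heC
  have hEp : PerZ E := perZ_resc he
  have hE1 : ContDiff ℝ 1 E := hE.of_le (by norm_num)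
  have cg : Continuous fun q => fun k => pd E k q := continuous_pi fun k => continuous_pd hE1 k
  obtain ⟨ir, hr⟩ := integrable_inv_sq hd cg (fun q hq => resc_morse heC heM q hq)
  have hrpos : ∀ᵐ q ∂(nu (n+1)), 0 < ‖fun k => pd E k q‖ ^ 2 := by
    filter_upwards [hr] with q hq
    exact pow_pos (norm_pos_iff.2 hq) 2
  have hg : ∀ᵐ q ∂(nu (n+1)), gradSq E q ≠ 0 := by
    filter_upwards [hrpos] with q hq
    exact (hq.trans_le (norm_sq_le_gradSq E q)).ne'
  choose Bk hBk0 hBk using fun k => exists_bound (continuous_pd hE1 k)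
  set B : ℝ := ∑ k, Bk k with hBdef
  have hB0 : 0 ≤ B := Finset.sum_nonneg fun k _ => hBk0 k
  have hB : ∀ᵐ q ∂(nu (n+1)), ∀ k, |pd E k q| ≤ B := by
    filter_upwards [ae_all_iff.2 hBk] with q hq k
    exact (hq k).trans (Finset.single_le_sum (f := Bk) (fun i _ => hBk0 i) (Finset.mem_univ k))
  obtain ⟨D, hD0, hD⟩ := exists_bound (continuous_lap hE)
  set K : ℝ := ∫ q, (‖fun k => pd E k q‖ ^ 2)⁻¹ ∂(nu (n+1)) + 1 with hK
  have hKpos : 0 < K := by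
    have : 0 ≤ ∫ q, (‖fun k => pd E k q‖ ^ 2)⁻¹ ∂(nu (n+1)) :=
      integral_nonneg fun q => by positivity
    linarith
  set C : ℝ := 2 * (n + 1) * (2 * π * (n + 1)) * B + D with hCdef
  have hC0 : 0 ≤ C := by positivity
  refine ⟨1 / (K * (C + 1)), by positivity, ?_⟩
  intro V Hop Mv hH hM hPhi ψ μ hψ
  obtain ⟨sV, hS⟩ := phi_bound (by positivity) hPhi
  set S := ∑' x, |V x| * (1 + lnorm x) with hSdef
  have hl : ∀ x : Γd (n+1), 0 ≤ 1 + lnorm x := fun x => by linarith [lnorm_nonneg x]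
  have hS0 : 0 ≤ S := tsum_nonneg fun x => mul_nonneg (abs_nonneg _) (hl x)
  set u : Lp ℂ 2 (nu (n+1)) := (chiBasis (n+1)).repr.symm ψ with hu
  set L : ℝ := ∫ q, ‖u q‖ ∂(nu (n+1)) with hL
  have hL0 : 0 ≤ L := integral_nonneg fun q => norm_nonneg _
  have hψL : ∀ x, ‖(ψ : ∀ _ : Γd (n+1), ℂ) x‖ ≤ L := norm_coeff_le ψ
  have hle : ∀ x, ‖(V x : ℂ) * (ψ : ∀ _ : Γd (n+1), ℂ) x‖ * (1 + lnorm x)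
      ≤ L * (|V x| * (1 + lnorm x)) := by
    intro x
    rw [norm_mul, Complex.norm_real, Real.norm_eq_abs]
    have := mul_le_mul_of_nonneg_left (hψL x) (mul_nonneg (abs_nonneg (V x)) (hl x))
    linarith
  have ha : Summable fun x => ‖(V x : ℂ) * (ψ : ∀ _ : Γd (n+1), ℂ) x‖ * (1 + lnorm x) :=
    Summable.of_nonneg_of_le (fun x => mul_nonneg (norm_nonneg _) (hl x)) hle (sV.mul_left L)
  have hT : ∑' x, ‖(V x : ℂ) * (ψ : ∀ _ : Γd (n+1), ℂ) x‖ * (1 + lnorm x) ≤ L * S := by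
    rw [hSdef, ← tsum_mul_left]
    exact ha.tsum_le_tsum hle (sV.mul_left L)
  have heq := eigen_eq heC.continuous hH hM hψ ha
  have hmu : MemLp (fun q => u q) 2 (nu (n+1)) := Lp.memLp u
  have hcore := core hE hEp hg μ (contDiff_ser ha) (perZ_ser _) hmu heq
    (P0 := L * S) (P1 := 2 * π * (n + 1) * (L * S)) (by positivity) hB0 hD0
    (fun q => (norm_ser_le ha q).trans hT)
    (fun q k => (norm_fderiv_ser_le ha q k).trans (by
      push_cast
      exact mul_le_mul_of_nonneg_left hT (by positivity))) hB hD
  have hcore2 : ∫ q, gradSq E q * ‖u q‖ ^ 2 ∂(nu (n+1)) ≤ C * S * L ^ 2 := by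
    refine hcore.trans (le_of_eq ?_)
    rw [← hL, hCdef]
    ring
  by_cases hLz : L = 0
  · ext x
    have := hψL x
    rw [hLz] at this
    simpa using this
  exfalso
  have hLpos : 0 < L := lt_of_le_of_ne hL0 (Ne.symm hLz)
  have cG := continuous_gradSq hE
  obtain ⟨G, hG0, hG⟩ := exists_bound cG
  have iu2 : Integrable (fun q => ‖u q‖ ^ 2) (nu (n+1)) := hmu.integrable_norm_pow two_ne_zero
  have iGu : Integrable (fun q => gradSq E q * ‖u q‖ ^ 2) (nu (n+1)) :=
    iu2.bdd_mul cG.aestronglyMeasurable (c := G) hG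
  have hs : 0 < K / L := by positivity
  have hLint : L ≤ (K / L) / 2 * (∫ q, gradSq E q * ‖u q‖ ^ 2 ∂(nu (n+1)))
      + 1 / (2 * (K / L)) * ∫ q, (‖fun k => pd E k q‖ ^ 2)⁻¹ ∂(nu (n+1)) := by
    rw [← integral_const_mul, ← integral_const_mul,
      ← integral_add (iGu.const_mul _) (ir.const_mul _)]
    apply integral_mono_ae (hmu.integrable (by norm_num)).norm
      ((iGu.const_mul _).add (ir.const_mul _))
    filter_upwards [hrpos] with q hq
    exact amgm hq hs (norm_sq_le_gradSq E q)
  have h1 : (K / L) / 2 * (∫ q, gradSq E q * ‖u q‖ ^ 2 ∂(nu (n+1)))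
      ≤ (K / L) / 2 * (C * S * L ^ 2) := mul_le_mul_of_nonneg_left hcore2 (by positivity)
  have h2 : 1 / (2 * (K / L)) * ∫ q, (‖fun k => pd E k q‖ ^ 2)⁻¹ ∂(nu (n+1))
      ≤ 1 / (2 * (K / L)) * K := mul_le_mul_of_nonneg_left (by linarith) (by positivity)
  have h3 : (K / L) / 2 * (C * S * L ^ 2) = K * C * S * L / 2 := by field_simp
  have h4 : 1 / (2 * (K / L)) * K = L / 2 := by field_simp
  have h5 : L ≤ K * C * S * L := by linarith
  have h6 : 1 ≤ K * C * S := by nlinarith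
  have h7 : S * (K * (C + 1)) < 1 := by rwa [lt_div_iff₀ (by positivity)] at hS
  nlinarith [mul_nonneg hS0 hKpos.le]

/-- Absence of eigenvalues for small `Φ_{2,2}(V)`.
There is `c(𝔢) > 0` such that `Φ_{2,2}(V) < c(𝔢)` implies `N_pp[𝔢,V] = 0`. -/
theorem statement13 (d : ℕ) (hd : 3 ≤ d)
    (e : (Fin d → ℝ) → ℝ) (he : IsDispersion e) (heC3 : ContDiff ℝ 3 e) (heM : CondM e) :
    ∃ c : ℝ, 0 < c ∧
      ∀ (V : Γd d → ℝ) (Hop Mv : L2 d →L[ℂ] L2 d),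
        IsMultiplier e Hop → IsMulOp V Mv →
        Phi 2 2 V < ENNReal.ofReal c →
        Npp (Hop + Mv) = 0 := by
  obtain ⟨n, rfl⟩ : ∃ n, d = n + 1 := ⟨d - 1, by omega⟩
  obtain ⟨c, hc, h⟩ := no_eig hd he.1 (heC3.of_le (by norm_num)) heM.1
  refine ⟨c, hc, fun V Hop Mv hH hM hP => ?_⟩
  have h0 : eigvecs (Hop + Mv) = ∅ := by
    rw [Set.eq_empty_iff_forall_notMem]
    rintro ψ ⟨hne, μ, hμ⟩
    exact hne (h V Hop Mv hH hM hP ψ μ hμ)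
  have hb : (Submodule.span ℂ (eigvecs (Hop + Mv))).topologicalClosure = ⊥ := by
    rw [h0, Submodule.span_empty]
    exact (isClosed_singleton (x := (0 : L2 (n+1)))).submodule_topologicalClosure_eq
  unfold Npp
  rw [hb]
  exact rank_bot ℂ _


end LatSch
end
end

section
/- Let d ≥ 3 and 0 < r < 1. There exists a constant C < ∞, depending only on d and r, such that for every C¹ function f : ℝ^d → ℝ with compact support contained in the open ball B_d, every a ∈ ℝ, and every b ∈ ℝ∖{0}: |∫_{B_d} f(x)/(a + ib − |x|²) d^d x| ≤ C·‖f‖_{C¹}·(1 + a² + b²). -/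
open MeasureTheory Complex Real
open scoped ENNReal

noncomputable section

namespace LatSch

local notation "⟪" a ", " b "⟫" => @inner ℂ _ _ a b

theorem aux_polar {E : Type*} [NormedAddCommGroup E] [NormedSpace ℝ E] [MeasurableSpace E]
    [Nontrivial E] (μ : Measure E) [FiniteDimensional ℝ E] [BorelSpace E] [μ.IsAddHaarMeasure]
    (G : E → ℂ) (hG : Integrable G μ) :
    ∫ x, G x ∂μ = ∫ ω, (∫ s in Set.Ioi (0 : ℝ),
      (s ^ (Module.finrank ℝ E - 1)) • G (s • (ω : E))) ∂μ.toSphere := by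
  have hmp := μ.measurePreserving_homeomorphUnitSphereProd
  have hemb := (homeomorphUnitSphereProd E).measurableEmbedding
  set g : Metric.sphere (0 : E) 1 × Set.Ioi (0 : ℝ) → ℂ := fun p => G ((p.2 : ℝ) • (p.1 : E)) with hg
  have hcomp : ∀ x : ({(0 : E)}ᶜ : Set E), g (homeomorphUnitSphereProd E x) = G x := by
    intro x
    have h1 := (homeomorphUnitSphereProd E).symm_apply_apply x
    have h2 : ((homeomorphUnitSphereProd E).symm (homeomorphUnitSphereProd E x) : E) = x := by
      rw [h1]
    rw [homeomorphUnitSphereProd_symm_apply_coe] at h2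
    simp only [hg]
    rw [h2]
  have hint : Integrable g (μ.toSphere.prod (.volumeIoiPow (Module.finrank ℝ E - 1))) := by
    rw [← hmp.integrable_comp_emb hemb]
    have : g ∘ (homeomorphUnitSphereProd E) = G ∘ Subtype.val := by
      funext x; exact hcomp x
    rw [this, ← integrableOn_iff_comap_subtypeVal (by measurability)]
    exact hG.integrableOn
  calc ∫ x, G x ∂μ = ∫ x : ({(0)}ᶜ : Set E), G x.1 ∂(μ.comap (↑)) := by
        rw [integral_subtype_comap (measurableSet_singleton _).compl fun x ↦ G x,
          MeasureTheory.restrict_compl_singleton]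
    _ = ∫ p, g p ∂(μ.toSphere.prod (.volumeIoiPow (Module.finrank ℝ E - 1))) := by
        rw [← hmp.integral_comp hemb]
        exact integral_congr_ae (.of_forall fun x => (hcomp x).symm)
    _ = _ := by
        rw [integral_prod _ hint]
        refine integral_congr_ae (.of_forall fun ω => ?_)
        simp only [Measure.volumeIoiPow, ENNReal.ofReal, hg]
        rw [integral_withDensity_eq_integral_smul,
          integral_subtype_comap measurableSet_Ioi
            fun a ↦ Real.toNNReal (a ^ (Module.finrank ℝ E - 1)) • G (a • (ω : E)),
          setIntegral_congr_fun measurableSet_Ioi fun x hx ↦ ?_]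
        · rw [NNReal.smul_def, Real.coe_toNNReal _ (pow_nonneg hx.out.le _)]
        · exact (measurable_subtype_coe.pow_const _).real_toNNReal

theorem aux_log_le (t : ℝ) (ht : 0 < t) : |Real.log t| ≤ t + 4 * t ^ (-(1 / 4) : ℝ) := by
  have hp : 0 < t ^ (-(1 / 4) : ℝ) := Real.rpow_pos_of_pos ht _
  rw [abs_le]
  constructor
  · have h := Real.log_le_self hp.le
    rw [Real.log_rpow ht] at h
    linarith
  · have := Real.log_le_self ht.le
    linarith

theorem aux_sq_le (a s : ℝ) (hs : 0 ≤ s) : (s - √a) ^ 2 ≤ |a - s ^ 2| := by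
  rcases le_total 0 a with h | h
  · obtain ⟨c, hc, rfl⟩ : ∃ c, 0 ≤ c ∧ a = c ^ 2 := ⟨√a, Real.sqrt_nonneg _, (Real.sq_sqrt h).symm⟩
    rw [Real.sqrt_sq hc]
    have : c ^ 2 - s ^ 2 = (c - s) * (c + s) := by ring
    rw [this, abs_mul, abs_of_nonneg (a := c + s) (by positivity), ← sq_abs, abs_sub_comm s c, sq]
    gcongr
    rw [abs_le]; constructor <;> linarith
  · rw [Real.sqrt_eq_zero_of_nonpos h, abs_of_nonpos (by nlinarith)]
    nlinarith

/-- truncated integrable singularity -/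
def auxH (u : ℝ) : ℝ := Set.indicator (Set.Icc (-1) 1) (fun u => |u| ^ (-(1 / 2) : ℝ)) u

theorem auxH_integrable : Integrable auxH := by
  unfold auxH
  rw [integrable_indicator_iff measurableSet_Icc]
  have h0 : IntervalIntegrable (fun u : ℝ => u ^ (-(1 / 2) : ℝ)) volume 0 1 :=
    intervalIntegral.intervalIntegrable_rpow' (by norm_num)
  have h1 : IntervalIntegrable (fun u : ℝ => |u| ^ (-(1 / 2) : ℝ)) volume 0 1 := by
    refine h0.congr ?_
    intro u hu
    rw [Set.uIoc_of_le zero_le_one] at hu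
    simp only [abs_of_pos hu.1]
  have h2 : IntervalIntegrable (fun u : ℝ => |u| ^ (-(1 / 2) : ℝ)) volume (-1) 0 := by
    have := (IntervalIntegrable.iff_comp_neg (f := fun u : ℝ => |u| ^ (-(1 / 2) : ℝ))
      (a := 0) (b := 1)).1 h1
    simp only [abs_neg, neg_zero] at this
    exact this.symm
  have h3 := h2.trans h1
  rwa [intervalIntegrable_iff_integrableOn_Icc_of_le (by norm_num)] at h3

theorem auxH_nonneg (u : ℝ) : 0 ≤ auxH u :=
  Set.indicator_nonneg (fun u _ => by positivity) u

theorem auxH_le (u : ℝ) : |u| ^ (-(1 / 2) : ℝ) ≤ 1 + auxH u := by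
  by_cases h : u ∈ Set.Icc (-1 : ℝ) 1
  · simp [auxH, h]
  · have : 1 ≤ |u| := by
      by_contra hc
      push Not at hc
      exact h (abs_le.1 hc.le)
    have h1 := Real.rpow_le_one_of_one_le_of_nonpos this (z := -(1/2)) (by norm_num)
    linarith [auxH_nonneg u]

theorem aux_ne (a b s : ℝ) (hb : b ≠ 0) :
    (a : ℂ) + Complex.I * (b : ℂ) - ((s ^ 2 : ℝ) : ℂ) ∈ Complex.slitPlane := by
  right
  have : ((s : ℂ) ^ 2).im = 0 := by rw [← Complex.ofReal_pow, Complex.ofReal_im]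
  simp [this, hb]

theorem aux_pt (a b s : ℝ) (hb : b ≠ 0) (hs : 0 ≤ s) (hs1 : s ≤ 1) (hne : s ≠ √a) :
    ‖Complex.log ((a : ℂ) + Complex.I * (b : ℂ) - ((s ^ 2 : ℝ) : ℂ))‖ ≤
      (|a| + |b| + 5 + π) + 4 * auxH (s - √a) := by
  set w := (a : ℂ) + Complex.I * (b : ℂ) - ((s ^ 2 : ℝ) : ℂ) with hw
  have hw0 : 0 < ‖w‖ := norm_pos_iff.2 (Complex.slitPlane_ne_zero (aux_ne a b s hb))
  have h1 : ‖Complex.log w‖ ≤ |Real.log ‖w‖| + π := by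
    refine (Complex.norm_le_abs_re_add_abs_im _).trans ?_
    rw [Complex.log_re, Complex.log_im]
    gcongr
    exact Complex.abs_arg_le_pi w
  have h2 := aux_log_le _ hw0
  have h3 : ‖w‖ ≤ |a| + |b| + 1 := by
    refine (norm_sub_le _ _).trans ?_
    gcongr
    · refine (norm_add_le _ _).trans ?_
      simp
    · rw [Complex.norm_real, Real.norm_eq_abs, abs_of_nonneg (by positivity)]
      nlinarith
  have h4 : (s - √a) ^ 2 ≤ ‖w‖ := by
    refine (aux_sq_le a s hs).trans ?_
    have : w.re = a - s ^ 2 := by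
      simp only [hw, Complex.sub_re, Complex.add_re, Complex.ofReal_re, Complex.mul_re,
        Complex.I_re, Complex.I_im, Complex.ofReal_im]
      ring
    rw [← this]
    exact Complex.abs_re_le_norm w
  have hpos : 0 < |s - √a| := abs_pos.2 (sub_ne_zero.2 hne)
  have h5 : ‖w‖ ^ (-(1 / 4) : ℝ) ≤ |s - √a| ^ (-(1 / 2) : ℝ) := by
    have : |s - √a| ^ (-(1 / 2) : ℝ) = ((s - √a) ^ 2) ^ (-(1 / 4) : ℝ) := by
      rw [← sq_abs, ← Real.rpow_natCast, ← Real.rpow_mul hpos.le]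
      norm_num
    rw [this]
    refine Real.rpow_le_rpow_of_nonpos ?_ h4 (by norm_num)
    rw [← sq_abs]; positivity
  have h6 := auxH_le (s - √a)
  linarith

theorem aux_cont (a b : ℝ) (hb : b ≠ 0) :
    Continuous fun s : ℝ => Complex.log ((a : ℂ) + Complex.I * (b : ℂ) - ((s ^ 2 : ℝ) : ℂ)) := by
  refine Continuous.clog (by fun_prop) fun s => aux_ne a b s hb

theorem aux_logint (r : ℝ) (hr0 : 0 < r) (hr1 : r < 1) : ∃ K : ℝ, ∀ a b : ℝ, b ≠ 0 →
    ∫ s in (0 : ℝ)..r, ‖Complex.log ((a : ℂ) + Complex.I * (b : ℂ) - ((s ^ 2 : ℝ) : ℂ))‖ ≤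
      K * (1 + a ^ 2 + b ^ 2) := by
  refine ⟨8 + π + 4 * ∫ u, auxH u, fun a b hb => ?_⟩
  have hI : Integrable (fun s => auxH (s - √a)) := auxH_integrable.comp_sub_right _
  have h1 : ∫ s in (0 : ℝ)..r, ‖Complex.log ((a : ℂ) + Complex.I * (b : ℂ) - ((s ^ 2 : ℝ) : ℂ))‖ ≤
      ∫ s in (0 : ℝ)..r, ((|a| + |b| + 5 + π) + 4 * auxH (s - √a)) := by
    refine intervalIntegral.integral_mono_ae_restrict hr0.le
      ((aux_cont a b hb).norm.intervalIntegrable _ _) ?_ ?_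
    · exact intervalIntegrable_const.add (hI.intervalIntegrable.const_mul _)
    · have hn : ∀ᵐ s ∂(volume.restrict (Set.Icc 0 r)), s ≠ √a :=
        ae_restrict_of_ae (by simp [ae_iff])
      filter_upwards [ae_restrict_mem measurableSet_Icc, hn] with s hs hs'
      exact aux_pt a b s hb hs.1 (hs.2.trans hr1.le) hs'
  have h2 : ∫ s in (0 : ℝ)..r, ((|a| + |b| + 5 + π) + 4 * auxH (s - √a)) =
      r * (|a| + |b| + 5 + π) + 4 * ∫ s in (0 : ℝ)..r, auxH (s - √a) := by
    rw [intervalIntegral.integral_add intervalIntegrable_const (hI.intervalIntegrable.const_mul _)]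
    simp
    ring
  have h3 : ∫ s in (0 : ℝ)..r, auxH (s - √a) ≤ ∫ u, auxH u := by
    rw [intervalIntegral.integral_of_le hr0.le, ← integral_sub_right_eq_self auxH (√a)]
    exact setIntegral_le_integral hI (.of_forall fun s => auxH_nonneg _)
  have h4 : 0 ≤ ∫ u, auxH u := integral_nonneg auxH_nonneg
  have ha : |a| ≤ 1 + a ^ 2 := by nlinarith [sq_abs a, sq_nonneg (|a| - 1)]
  have hb' : |b| ≤ 1 + b ^ 2 := by nlinarith [sq_abs b, sq_nonneg (|b| - 1)]
  have hpi := Real.pi_pos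
  have h5 : r * (|a| + |b| + 5 + π) ≤ |a| + |b| + 5 + π := by
    have : 0 ≤ |a| + |b| + 5 + π := by positivity
    nlinarith
  rw [h2] at h1
  have h6 : 0 ≤ (8 + π + 4 * ∫ u, auxH u) * (a ^ 2 + b ^ 2) := by positivity
  have h7 : 0 ≤ (7 + π + 4 * ∫ u, auxH u) * (a ^ 2 + b ^ 2) := by positivity
  nlinarith

theorem aux_radial (k : ℕ) (r : ℝ) (hr0 : 0 < r) (hr1 : r < 1) (a b : ℝ) (hb : b ≠ 0)
    (F F' : ℝ → ℝ) (hF : ∀ s, HasDerivAt F (F' s) s) (hF' : Continuous F') (M N : ℝ)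
    (hM : ∀ s, |F s| ≤ M) (hN : ∀ s, |F' s| ≤ N) (hr : F r = 0) :
    ‖∫ s in (0 : ℝ)..r, ((s ^ (k + 2) : ℝ) : ℂ) *
        ((F s : ℂ) / ((a : ℂ) + Complex.I * (b : ℂ) - ((s ^ 2 : ℝ) : ℂ)))‖ ≤
      ((k + 1) * M + N) *
        ∫ s in (0 : ℝ)..r, ‖Complex.log ((a : ℂ) + Complex.I * (b : ℂ) - ((s ^ 2 : ℝ) : ℂ))‖ := by
  have hFc : Continuous F := continuous_iff_continuousAt.2 fun s => (hF s).continuousAt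
  set W : ℝ → ℂ := fun s => (a : ℂ) + Complex.I * (b : ℂ) - ((s ^ 2 : ℝ) : ℂ) with hW
  have hWs : ∀ s, W s ∈ Complex.slitPlane := fun s => aux_ne a b s hb
  have hW0 : ∀ s, W s ≠ 0 := fun s => Complex.slitPlane_ne_zero (hWs s)
  have hWc : Continuous W := by simp only [hW]; fun_prop
  set u' : ℝ → ℝ := fun s => ((k + 1 : ℕ) : ℝ) * s ^ k * F s + s ^ (k + 1) * F' s with hu'
  have hu : ∀ s, HasDerivAt (fun s : ℝ => ((s ^ (k + 1) * F s : ℝ) : ℂ)) ((u' s : ℝ) : ℂ) s := by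
    intro s
    have h := (hasDerivAt_pow (k + 1) s).mul (hF s)
    exact h.ofReal_comp
  have hv : ∀ s, HasDerivAt (fun s : ℝ => Complex.log (W s)) (-((2 * s : ℝ) : ℂ) / W s) s := by
    intro s
    refine HasDerivAt.clog_real ?_ (hWs s)
    have h := ((hasDerivAt_pow 2 s).ofReal_comp).const_sub ((a : ℂ) + Complex.I * (b : ℂ))
    simpa [hW] using h
  have hu'c : Continuous u' := by simp only [hu']; fun_prop
  have hparts := intervalIntegral.integral_mul_deriv_eq_deriv_mul (a := 0) (b := r)
    (fun s _ => hu s) (fun s _ => hv s)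
    ((Complex.continuous_ofReal.comp hu'c).intervalIntegrable _ _)
    (Continuous.intervalIntegrable
      (Continuous.div (by fun_prop) hWc hW0) _ _)
  have hE : ∫ s in (0 : ℝ)..r, ((s ^ (k + 2) : ℝ) : ℂ) * ((F s : ℂ) / W s) =
      (1 / 2) * ∫ s in (0 : ℝ)..r, ((u' s : ℝ) : ℂ) * Complex.log (W s) := by
    have h1 : ∫ s in (0 : ℝ)..r, ((s ^ (k + 2) : ℝ) : ℂ) * ((F s : ℂ) / W s) =
        (-1 / 2) * ∫ s in (0 : ℝ)..r, ((s ^ (k + 1) * F s : ℝ) : ℂ) *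
          (-((2 * s : ℝ) : ℂ) / W s) := by
      rw [← intervalIntegral.integral_const_mul]
      congr 1
      funext s
      push_cast
      ring
    rw [h1, hparts, hr]
    simp
    ring
  rw [hE, norm_mul]
  have hM0 : 0 ≤ M := (abs_nonneg _).trans (hM 0)
  have hN0 : 0 ≤ N := (abs_nonneg _).trans (hN 0)
  have hb1 : ‖∫ s in (0 : ℝ)..r, ((u' s : ℝ) : ℂ) * Complex.log (W s)‖ ≤
      ∫ s in (0 : ℝ)..r, ((k + 1) * M + N) * ‖Complex.log (W s)‖ := by
    refine intervalIntegral.norm_integral_le_of_norm_le hr0.le (.of_forall fun s hs => ?_)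
      ((continuous_const.mul (aux_cont a b hb).norm).intervalIntegrable _ _)
    rw [norm_mul, Complex.norm_real, Real.norm_eq_abs]
    gcongr
    have hs1 : s ≤ 1 := hs.2.trans hr1.le
    have hs0 : 0 ≤ s := hs.1.le
    refine (abs_add_le _ _).trans ?_
    rw [abs_mul, abs_mul, abs_mul, abs_of_nonneg (pow_nonneg hs0 k),
      abs_of_nonneg (pow_nonneg hs0 (k + 1)), Nat.abs_cast]
    push_cast
    have p1 := pow_le_one₀ hs0 hs1 (n := k)
    have p2 := pow_le_one₀ hs0 hs1 (n := k + 1)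
    have q1 : ((k : ℝ) + 1) * s ^ k ≤ k + 1 := by
      have : (0 : ℝ) ≤ k + 1 := by positivity
      nlinarith
    have q2 : ((k : ℝ) + 1) * s ^ k * |F s| ≤ (k + 1) * M :=
      mul_le_mul q1 (hM s) (abs_nonneg _) (by positivity)
    have q3 : s ^ (k + 1) * |F' s| ≤ 1 * N :=
      mul_le_mul p2 (hN s) (abs_nonneg _) (by positivity)
    linarith
  rw [intervalIntegral.integral_const_mul] at hb1
  have : ‖(1 / 2 : ℂ)‖ = 1 / 2 := by simp
  rw [this]
  nlinarith [norm_nonneg (∫ s in (0 : ℝ)..r, ((u' s : ℝ) : ℂ) * Complex.log (W s))]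

/-- Lemma 2: fully elliptic van Hove singularity.
For `d ≥ 3` and `0 < r < 1` there is `C < ∞`, depending only on `d` and `r`, such that
for every `C¹` function `f : ℝ^d → ℝ` with compact support in `B_d` and
`‖f‖_{C¹} ≤ M`, every `a ∈ ℝ` and every `b ≠ 0`:
`|∫_{B_d} f(x)/(a + ib - |x|²) dx| ≤ C M (1 + a² + b²)`. -/
theorem statement17 (d : ℕ) (hd : 3 ≤ d) (r : ℝ) (hr0 : 0 < r) (hr1 : r < 1) :
    ∃ c : ℝ, ∀ (f : EuclideanSpace ℝ (Fin d) → ℝ) (M : ℝ) (a b : ℝ), b ≠ 0 →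
      ContDiff ℝ 1 f →
      tsupport f ⊆ Metric.ball (0 : EuclideanSpace ℝ (Fin d)) r →
      (∀ x, |f x| ≤ M) →
      (∀ (x : EuclideanSpace ℝ (Fin d)) (i : Fin d),
        |fderiv ℝ f x (EuclideanSpace.single i 1)| ≤ M) →
      ‖∫ x in Metric.ball (0 : EuclideanSpace ℝ (Fin d)) r,
          (f x : ℂ) / ((a : ℂ) + Complex.I * (b : ℂ) - ((‖x‖ ^ 2 : ℝ) : ℂ))‖ ≤
        c * M * (1 + a ^ 2 + b ^ 2) := by
  obtain ⟨K, hK⟩ := aux_logint r hr0 hr1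
  obtain ⟨k, rfl⟩ : ∃ k, d = k + 3 := ⟨d - 3, by omega⟩
  set S : ℝ := (volume : Measure (EuclideanSpace ℝ (Fin (k + 3)))).toSphere.real Set.univ with hS
  refine ⟨(((k + 1) + (k + 3)) * K) * S, ?_⟩
  intro f M a b hb hf hsupp hM hdM
  have hM0 : 0 ≤ M := (abs_nonneg _).trans (hM 0)
  have hz : ∀ x : EuclideanSpace ℝ (Fin (k + 3)), r ≤ ‖x‖ → f x = 0 := by
    intro x hx
    refine image_eq_zero_of_notMem_tsupport fun h => ?_
    have := hsupp h
    rw [mem_ball_zero_iff] at this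
    linarith
  set G : EuclideanSpace ℝ (Fin (k + 3)) → ℂ := fun x =>
    (f x : ℂ) / ((a : ℂ) + Complex.I * (b : ℂ) - ((‖x‖ ^ 2 : ℝ) : ℂ)) with hG
  have hGc : Continuous G := by
    refine Continuous.div (Complex.continuous_ofReal.comp hf.continuous) (by fun_prop)
      fun x => Complex.slitPlane_ne_zero (aux_ne a b ‖x‖ hb)
  have hGz : ∀ x, r ≤ ‖x‖ → G x = 0 := by
    intro x hx
    simp [hG, hz x hx]
  have hGs : HasCompactSupport G := by
    refine HasCompactSupport.of_support_subset_isCompact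
      (isCompact_closedBall (0 : EuclideanSpace ℝ (Fin (k + 3))) r) fun x hx => ?_
    rw [mem_closedBall_zero_iff]
    by_contra hc
    exact hx (hGz x (not_le.1 hc).le)
  have hGi : Integrable G := hGc.integrable_of_hasCompactSupport hGs
  rw [setIntegral_eq_integral_of_forall_compl_eq_zero (fun x hx => hGz x (by
    rw [mem_ball_zero_iff] at hx; linarith)), aux_polar volume G hGi]
  have key : ∀ ω : Metric.sphere (0 : EuclideanSpace ℝ (Fin (k + 3))) 1,
      ‖∫ s in Set.Ioi (0 : ℝ), (s ^ (Module.finrank ℝ (EuclideanSpace ℝ (Fin (k + 3))) - 1)) •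
        G (s • (ω : EuclideanSpace ℝ (Fin (k + 3))))‖ ≤
      (((k + 1) + (k + 3)) * K) * M * (1 + a ^ 2 + b ^ 2) := by
    rintro ⟨w, hw⟩
    have hw1 : ‖w‖ = 1 := by simpa using hw
    have hns : ∀ s : ℝ, 0 < s → ‖s • w‖ = s := fun s hs => by
      rw [norm_smul, hw1, mul_one, Real.norm_eq_abs, abs_of_pos hs]
    have hF : ∀ s : ℝ, HasDerivAt (fun s : ℝ => f (s • w)) (fderiv ℝ f (s • w) w) s := by
      intro s
      have h1 : HasDerivAt (fun s : ℝ => s • w) w s := by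
        simpa using (hasDerivAt_id s).smul_const w
      exact ((hf.differentiable one_ne_zero (s • w)).hasFDerivAt).comp_hasDerivAt s h1
    have hF'c : Continuous fun s : ℝ => fderiv ℝ f (s • w) w := by
      have := hf.continuous_fderiv one_ne_zero
      fun_prop
    have hN : ∀ s : ℝ, |fderiv ℝ f (s • w) w| ≤ (k + 3) * M := by
      intro s
      have hwsum : ∑ i, w i • EuclideanSpace.single i (1 : ℝ) = w := by
        ext j
        simp [Finset.sum_apply, Pi.single_apply]
      have hsum : ∑ i, w i * fderiv ℝ f (s • w) (EuclideanSpace.single i (1 : ℝ)) =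
          fderiv ℝ f (s • w) w := by
        have := congrArg (fderiv ℝ f (s • w)) hwsum
        rw [map_sum] at this
        simpa using this
      rw [← hsum]
      refine (Finset.abs_sum_le_sum_abs _ _).trans ?_
      refine (Finset.sum_le_sum (g := fun _ => M) fun i _ => ?_).trans (le_of_eq ?_)
      · rw [abs_mul]
        have h1 : |w i| ≤ 1 := hw1 ▸ PiLp.norm_apply_le w i
        calc _ ≤ 1 * M := mul_le_mul h1 (hdM _ i) (abs_nonneg _) zero_le_one
          _ = M := one_mul M
      · simp
    have hrad := aux_radial k r hr0 hr1 a b hb _ _ hF hF'c M ((k + 3) * M)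
      (fun s => hM _) hN (hz _ (hns r hr0).ge)
    have heq : ∫ s in Set.Ioi (0 : ℝ),
        (s ^ (Module.finrank ℝ (EuclideanSpace ℝ (Fin (k + 3))) - 1)) • G (s • w) =
        ∫ s in (0 : ℝ)..r, ((s ^ (k + 2) : ℝ) : ℂ) *
        ((f (s • w) : ℂ) / ((a : ℂ) + Complex.I * (b : ℂ) - ((s ^ 2 : ℝ) : ℂ))) := by
      rw [intervalIntegral.integral_of_le hr0.le]
      rw [setIntegral_eq_of_subset_of_forall_sdiff_eq_zero measurableSet_Ioi
        (show Set.Ioc (0 : ℝ) r ⊆ Set.Ioi 0 from fun s hs => hs.1)]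
      · refine setIntegral_congr_fun measurableSet_Ioc fun s hs => ?_
        simp only [hG, hns s hs.1, finrank_euclideanSpace, Fintype.card_fin, Complex.real_smul]
        rfl
      · intro s hs
        have h0 : 0 < s := hs.1
        have h1 : r ≤ s := by
          by_contra hc
          exact hs.2 ⟨h0, (not_le.1 hc).le⟩
        rw [hGz _ (by rw [hns s h0]; exact h1), smul_zero]
    simp only
    rw [heq]
    refine hrad.trans ?_
    have h1 := hK a b hb
    have h2 : (0 : ℝ) ≤ ((k + 1) * M + (k + 3) * M) := by positivity
    calc _ ≤ ((k + 1) * M + (k + 3) * M) * (K * (1 + a ^ 2 + b ^ 2)) := by gcongr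
      _ = _ := by ring
  refine (norm_integral_le_of_norm_le_const (.of_forall key)).trans (le_of_eq ?_)
  rw [← hS]
  ring


end LatSch
end
end
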